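/- arXiv:1504.01148 — 2 statements merged into one kernel-verified Lean document; each statement's English description precedes it below -/
import Mathlib

section
/- Let R be a commutative Noetherian ring with unity, I an ideal of R, and M an R-module with cohomological dimension cd(I,M) = c > 0. Then there exists a descending chain of ideals I = I_c ⊋ I_{c-1} ⊋ ⋯ ⊋ I_0 of R such that cd(I_i, M) = i for every 0 ≤ i ≤ c and, moreover, the top local cohomology module H^i_{I_i}(M) is not an Artinian R-module for every i with 0 ≤ i ≤ c − 1. -/
universe u

open CategoryTheory

/-- The cohomological dimension of `M` with respect to `I`:
`cd(I,M) = sup { i ∈ ℕ | H^i_I(M) ≠ 0 }`, as an element of `ℕ∞`. -/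
noncomputable def cohomologicalDimension {R : Type u} [CommRing R] (I : Ideal R)
    (M : ModuleCat.{u} R) : ℕ∞ :=
  sSup {c : ℕ∞ | ∃ i : ℕ, c = i ∧ Nontrivial ((localCohomology I i).obj M)}

/-!
Choose an ideal `J` maximal among those contained in `I` with `cd(J, M) ≤ c - 1`. If the top module
`H = H^{c-1}_J(M)` were Artinian, then for `x ∈ I \ J` every `y ∈ H` would satisfy
`x ^ l • y ∈ x ^ (l + 1) • H` for some `l`, that is, `H^1_(x)(H) = 0`. Then
`cd(J + (x), M) ≤ c - 1`, contradicting the maximality of `J`. Iterating gives the chain.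

The inequality for `J + (x)` is proved by dimension shifting along embeddings into injective
modules, which reduces it to `H^0`, the power torsion. The shift preserves the condition on `x`
because, over a Noetherian ring, it holds for the `J`-power torsion of every injective module.
-/

section

open Limits Opposite

section LeftDerived

variable {C D : Type*} [Category* C] [Category* D] [Abelian C] [Abelian D]

/-- A short complex of additive functors, applied degreewise to a chain complex. -/
noncomputable abbrev mapChainComplex (S : ShortComplex (C ⥤ D))
    [S.X₁.Additive] [S.X₂.Additive] [S.X₃.Additive] (K : ChainComplex C ℕ) :
    ShortComplex (ChainComplex D ℕ) where
  X₁ := (S.X₁.mapHomologicalComplex _).obj K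
  X₂ := (S.X₂.mapHomologicalComplex _).obj K
  X₃ := (S.X₃.mapHomologicalComplex _).obj K
  f := (NatTrans.mapHomologicalComplex S.f _).app K
  g := (NatTrans.mapHomologicalComplex S.g _).app K
  zero := by
    ext i
    exact congr_app S.zero (K.X i)

/-- The functoriality of `mapChainComplex` in the chain complex. -/
noncomputable abbrev mapChainComplexMap (S : ShortComplex (C ⥤ D))
    [S.X₁.Additive] [S.X₂.Additive] [S.X₃.Additive] {K L : ChainComplex C ℕ} (φ : K ⟶ L) :
    mapChainComplex S K ⟶ mapChainComplex S L where
  τ₁ := (S.X₁.mapHomologicalComplex _).map φ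
  τ₂ := (S.X₂.mapHomologicalComplex _).map φ
  τ₃ := (S.X₃.mapHomologicalComplex _).map φ
  comm₁₂ := (NatTrans.mapHomologicalComplex S.f _).naturality φ
  comm₂₃ := (NatTrans.mapHomologicalComplex S.g _).naturality φ

section

variable [HasProjectiveResolutions C] (F G : C ⥤ D) [F.Additive] [G.Additive]

/-- Left derived functors are computed by the chosen projective resolutions. -/
noncomputable def leftDerivedObjIso (n : ℕ) (X : C) : (F.leftDerived n).obj X ≅
    ((F.mapHomologicalComplex _).obj (projectiveResolution X).complex).homology n :=
  (projectiveResolution X).isoLeftDerivedObj F n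

lemma leftDerived_map_comp_leftDerivedObjIso_hom (n : ℕ) {X Y : C} (f : X ⟶ Y) :
    (F.leftDerived n).map f ≫ (leftDerivedObjIso F n Y).hom =
      (leftDerivedObjIso F n X).hom ≫ HomologicalComplex.homologyMap
        ((F.mapHomologicalComplex _).map (ProjectiveResolution.lift f _ _)) n :=
  ProjectiveResolution.isoLeftDerivedObj_hom_naturality f _ _ _
    (ProjectiveResolution.lift_commutes_zero f _ _) F n

variable {F G}

lemma leftDerived_app_comp_leftDerivedObjIso_hom (α : F ⟶ G) (n : ℕ) (X : C) :
    (NatTrans.leftDerived α n).app X ≫ (leftDerivedObjIso G n X).hom =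
      (leftDerivedObjIso F n X).hom ≫ HomologicalComplex.homologyMap
        ((NatTrans.mapHomologicalComplex α _).app (projectiveResolution X).complex) n := by
  rw [← Iso.eq_comp_inv, Category.assoc]
  exact (projectiveResolution X).leftDerived_app_eq α n

lemma leftDerived_comp_fromLeftDerivedZero (α : F ⟶ G) :
    NatTrans.leftDerived α 0 ≫ G.fromLeftDerivedZero = F.fromLeftDerivedZero ≫ α := by
  ext X
  let P := projectiveResolution X
  have hα : HomologicalComplex.opcyclesMap
      ((NatTrans.mapHomologicalComplex α _).app P.complex) 0 ≫ P.fromLeftDerivedZero' G =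
        P.fromLeftDerivedZero' F ≫ α.app X := by
    rw [← cancel_epi (HomologicalComplex.pOpcycles _ _), HomologicalComplex.p_opcyclesMap_assoc,
      ProjectiveResolution.pOpcycles_comp_fromLeftDerivedZero',
      ProjectiveResolution.pOpcycles_comp_fromLeftDerivedZero'_assoc]
    exact (α.naturality _).symm
  have h_app (H : C ⥤ D) [H.Additive] : H.fromLeftDerivedZero.app X =
      (leftDerivedObjIso H 0 X).hom ≫
        HomologicalComplex.homologyι _ 0 ≫ P.fromLeftDerivedZero' H :=
    P.fromLeftDerivedZero_eq H
  rw [NatTrans.comp_app, NatTrans.comp_app, h_app, h_app,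
    reassoc_of% leftDerived_app_comp_leftDerivedObjIso_hom α 0 X,
    HomologicalComplex.homologyι_naturality_assoc, hα]
  simp only [Category.assoc, P]

end

variable {S : ShortComplex (C ⥤ D)} [S.X₁.Additive] [S.X₂.Additive] [S.X₃.Additive]
  (hS : ∀ (P : C) [Projective P], (S.map ((evaluation C D).obj P)).ShortExact)

include hS in
lemma shortExact_mapChainComplex_complex {X : C} (P : ProjectiveResolution X) :
    (mapChainComplex S P.complex).ShortExact :=
  HomologicalComplex.shortExact_of_degreewise_shortExact _ fun i ↦ hS (P.complex.X i)

variable [HasProjectiveResolutions C]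

/-- The connecting morphism between the left derived functors of the terms of a sequence of
functors which is short exact on projective objects. -/
noncomputable def leftDerivedδ (n : ℕ) : S.X₃.leftDerived (n + 1) ⟶ S.X₁.leftDerived n where
  app X := (leftDerivedObjIso S.X₃ (n + 1) X).hom ≫
    (shortExact_mapChainComplex_complex hS (projectiveResolution X)).δ (n + 1) n rfl ≫
      (leftDerivedObjIso S.X₁ n X).inv
  naturality X Y f := by
    have h := HomologicalComplex.HomologySequence.δ_naturality
      (mapChainComplexMap S (ProjectiveResolution.lift f (projectiveResolution X)
        (projectiveResolution Y)))
      (shortExact_mapChainComplex_complex hS _) (shortExact_mapChainComplex_complex hS _)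
      (n + 1) n rfl
    rw [← cancel_mono (leftDerivedObjIso S.X₁ n Y).hom]
    simp only [Category.assoc, leftDerived_map_comp_leftDerivedObjIso_hom,
      reassoc_of% leftDerived_map_comp_leftDerivedObjIso_hom S.X₃ (n + 1) f,
      Iso.inv_hom_id, Category.comp_id, Iso.inv_hom_id_assoc, h]

lemma leftDerivedδ_app_comp_leftDerivedObjIso_hom (n : ℕ) (X : C) :
    (leftDerivedδ hS n).app X ≫ (leftDerivedObjIso S.X₁ n X).hom =
      (leftDerivedObjIso S.X₃ (n + 1) X).hom ≫
        (shortExact_mapChainComplex_complex hS (projectiveResolution X)).δ (n + 1) n rfl := by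
  simp only [leftDerivedδ, Category.assoc, Iso.inv_hom_id, Category.comp_id]

lemma leftDerivedδ_comp (n : ℕ) : leftDerivedδ hS n ≫ NatTrans.leftDerived S.f n = 0 := by
  ext X
  have h := (shortExact_mapChainComplex_complex hS (projectiveResolution X)).δ_comp (n + 1) n rfl
  rw [NatTrans.comp_app, ← cancel_mono (leftDerivedObjIso S.X₂ n X).hom, Category.assoc,
    leftDerived_app_comp_leftDerivedObjIso_hom, ← Category.assoc,
    leftDerivedδ_app_comp_leftDerivedObjIso_hom, Category.assoc, h, comp_zero]
  exact zero_comp.symm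

lemma comp_leftDerivedδ (n : ℕ) : NatTrans.leftDerived S.g (n + 1) ≫ leftDerivedδ hS n = 0 := by
  ext X
  have h := (shortExact_mapChainComplex_complex hS (projectiveResolution X)).comp_δ (n + 1) n rfl
  rw [NatTrans.comp_app, ← cancel_mono (leftDerivedObjIso S.X₁ n X).hom, Category.assoc,
    leftDerivedδ_app_comp_leftDerivedObjIso_hom, ← Category.assoc,
    leftDerived_app_comp_leftDerivedObjIso_hom, Category.assoc, h, comp_zero]
  exact zero_comp.symm

lemma exact_leftDerivedδ_leftDerived (n : ℕ) (X : C) :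
    ((ShortComplex.mk _ _ (leftDerivedδ_comp hS n)).map ((evaluation C D).obj X)).Exact :=
  (ShortComplex.exact_iff_of_iso (ShortComplex.isoMk (leftDerivedObjIso S.X₃ (n + 1) X)
    (leftDerivedObjIso S.X₁ n X) (leftDerivedObjIso S.X₂ n X)
    (leftDerivedδ_app_comp_leftDerivedObjIso_hom hS n X).symm
    (leftDerived_app_comp_leftDerivedObjIso_hom S.f n X).symm)).2
    ((shortExact_mapChainComplex_complex hS _).homology_exact₁ (n + 1) n rfl)

lemma exact_leftDerived_leftDerivedδ (n : ℕ) (X : C) :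
    ((ShortComplex.mk _ _ (comp_leftDerivedδ hS n)).map ((evaluation C D).obj X)).Exact :=
  (ShortComplex.exact_iff_of_iso (ShortComplex.isoMk (leftDerivedObjIso S.X₂ (n + 1) X)
    (leftDerivedObjIso S.X₃ (n + 1) X) (leftDerivedObjIso S.X₁ n X)
    (leftDerived_app_comp_leftDerivedObjIso_hom S.g (n + 1) X).symm
    (leftDerivedδ_app_comp_leftDerivedObjIso_hom hS n X).symm)).2
    ((shortExact_mapChainComplex_complex hS _).homology_exact₃ (n + 1) n rfl)

end LeftDerived

section Ext

variable {R C : Type*} [Ring R] [Category* C] [Abelian C] [Linear R C]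

variable (R) in
/-- The sequence `Hom(-, S.X₃), Hom(-, S.X₂), Hom(-, S.X₁)` of covariant functors to the opposite
of the category of modules, whose left derived functors define `Ext`. -/
noncomputable abbrev linearYonedaRightOp (S : ShortComplex C) :
    ShortComplex (C ⥤ (ModuleCat R)ᵒᵖ) where
  X₁ := ((linearYoneda R C).obj S.X₃).rightOp
  X₂ := ((linearYoneda R C).obj S.X₂).rightOp
  X₃ := ((linearYoneda R C).obj S.X₁).rightOp
  f := NatTrans.rightOp ((linearYoneda R C).map S.g)
  g := NatTrans.rightOp ((linearYoneda R C).map S.f)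
  zero := by
    ext X
    apply Quiver.Hom.unop_inj
    ext (φ : X ⟶ S.X₁)
    change (φ ≫ S.f) ≫ S.g = 0
    rw [Category.assoc, S.zero, comp_zero]

variable {S : ShortComplex C}

lemma shortExact_linearYonedaRightOp (hS : S.ShortExact) (P : C) [Projective P] :
    ((linearYonedaRightOp R S).map ((evaluation _ _).obj P)).ShortExact := by
  have := hS.mono_f
  have := hS.epi_g
  have h : ((linearYonedaRightOp R S).map ((evaluation _ _).obj P)).unop.ShortExact :=
    { exact := (ShortComplex.moduleCat_exact_iff _).2 fun (φ : P ⟶ S.X₂) (hφ : φ ≫ S.g = 0) ↦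
        ⟨hS.exact.lift φ hφ, hS.exact.lift_f φ hφ⟩
      mono_f := (ModuleCat.mono_iff_injective _).2 fun (φ ψ : P ⟶ S.X₁) h ↦
        (cancel_mono S.f).1 h
      epi_g := (ModuleCat.epi_iff_surjective _).2 fun (φ : P ⟶ S.X₃) ↦
        ⟨Projective.factorThru φ S.g, Projective.factorThru_comp φ S.g⟩ }
  exact h.op

variable [EnoughProjectives C] (hS : S.ShortExact) (n : ℕ)

/-- The connecting morphism `Ext^n(-, S.X₃) ⟶ Ext^(n + 1)(-, S.X₁)`. -/
noncomputable def extδ : (Ext R C n).flip.obj S.X₃ ⟶ (Ext R C (n + 1)).flip.obj S.X₁ :=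
  NatTrans.leftOp (leftDerivedδ (S := linearYonedaRightOp R S)
    (shortExact_linearYonedaRightOp hS) n)

lemma map_comp_extδ : (Ext R C n).flip.map S.g ≫ extδ hS n = 0 :=
  congrArg NatTrans.leftOp (leftDerivedδ_comp (S := linearYonedaRightOp R S)
    (shortExact_linearYonedaRightOp hS) n)

lemma extδ_comp_map : extδ hS n ≫ (Ext R C (n + 1)).flip.map S.f = 0 :=
  congrArg NatTrans.leftOp (comp_leftDerivedδ (S := linearYonedaRightOp R S)
    (shortExact_linearYonedaRightOp hS) n)

lemma exact_map_extδ (X : Cᵒᵖ) :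
    ((ShortComplex.mk _ _ (map_comp_extδ (R := R) hS n)).map ((evaluation _ _).obj X)).Exact :=
  (exact_leftDerivedδ_leftDerived (S := linearYonedaRightOp R S)
    (shortExact_linearYonedaRightOp hS) n X.unop).unop

lemma exact_extδ_map (X : Cᵒᵖ) :
    ((ShortComplex.mk _ _ (extδ_comp_map (R := R) hS n)).map ((evaluation _ _).obj X)).Exact :=
  (exact_leftDerived_leftDerivedδ (S := linearYonedaRightOp R S)
    (shortExact_linearYonedaRightOp hS) n X.unop).unop

lemma isZero_Ext_succ_of_injective (X Y : C) [Injective Y] :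
    IsZero (((Ext R C (n + 1)).obj (op X)).obj Y) := by
  let P := projectiveResolution X
  refine IsZero.of_iso ?_ (P.isoExt (n + 1) Y)
  rw [← HomologicalComplex.exactAt_iff_isZero_homology,
    HomologicalComplex.exactAt_iff' _ n (n + 1) (n + 2) (by simp) (by simp),
    ShortComplex.moduleCat_exact_iff]
  intro (φ : P.complex.X (n + 1) ⟶ Y) (hφ : P.complex.d (n + 2) (n + 1) ≫ φ = 0)
  exact ⟨(P.exact_succ n).descToInjective φ hφ, (P.exact_succ n).comp_descToInjective φ hφ⟩

instance preservesLimits_linearYoneda_obj (Y : C) :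
    PreservesLimits ((linearYoneda R C).obj Y) :=
  have : PreservesLimits ((linearYoneda R C).obj Y ⋙ forget _) :=
    (inferInstance : PreservesLimits (yoneda.obj Y))
  preservesLimits_of_reflects_of_preserves _ (forget _)

variable (R C) in
/-- `Ext^0` is `Hom`. -/
noncomputable def linearCoyonedaIsoExtZero : linearCoyoneda R C ≅ Ext R C 0 :=
  have (Y : C) : PreservesFiniteColimits ((linearYoneda R C).obj Y).rightOp :=
    preservesFiniteColimits_rightOp _
  let e (X : Cᵒᵖ) (Y : C) : ((linearCoyoneda R C).obj X).obj Y ≅ ((Ext R C 0).obj X).obj Y :=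
    ((asIso ((linearYoneda R C).obj Y).rightOp.fromLeftDerivedZero).app X.unop).unop
  NatIso.ofComponents
    (fun X ↦ NatIso.ofComponents (e X) fun f ↦ congrArg (fun α ↦ (α.app X.unop).unop)
      (leftDerived_comp_fromLeftDerivedZero
        (NatTrans.rightOp ((linearYoneda R C).map f))).symm)
    fun g ↦ by
      ext Y : 2
      exact congrArg Quiver.Hom.unop
        (((linearYoneda R C).obj Y).rightOp.fromLeftDerivedZero.naturality g.unop).symm

end Ext

section LocalCohomology

lemma exact_of_exact_map_evaluation {K C : Type*} [Category* K] [Category* C] [Abelian C]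
    {T : ShortComplex (K ⥤ C)} (h : ∀ k, (T.map ((evaluation K C).obj k)).Exact) : T.Exact := by
  rw [ShortComplex.exact_iff_isZero_homology, Functor.isZero_iff]
  exact fun k ↦ ((ShortComplex.exact_iff_isZero_homology _).1 (h k)).of_iso
    (T.mapHomologyIso ((evaluation K C).obj k)).symm

variable {R : Type u} [CommRing R]

/-- The inverse system of the modules `R ⧸ J ^ n`. -/
noncomputable abbrev powersQuotient (J : Ideal R) : ℕᵒᵖᵒᵖ ⥤ (ModuleCat.{u} R)ᵒᵖ :=
  (localCohomology.ringModIdeals (localCohomology.idealPowersDiagram J)).op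

variable (J : Ideal R) (i : ℕ)

/-- The colimit cocone defining local cohomology, evaluated at a module. -/
noncomputable def localCohomologyCocone (M : ModuleCat.{u} R) :
    Cocone (powersQuotient J ⋙ (Ext R (ModuleCat.{u} R) i).flip.obj M) :=
  ((evaluation _ _).obj M).mapCocone (colimit.cocone
    (localCohomology.diagram (localCohomology.idealPowersDiagram J) i))

/-- `localCohomologyCocone` is a colimit cocone. -/
noncomputable def isColimitLocalCohomologyCocone (M : ModuleCat.{u} R) :
    IsColimit (localCohomologyCocone J i M) :=
  isColimitOfPreserves _ (colimit.isColimit _)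

lemma localCohomologyCocone_ι_comp_map {M N : ModuleCat.{u} R} (f : M ⟶ N) (n : ℕᵒᵖᵒᵖ) :
    (localCohomologyCocone J i M).ι.app n ≫ (localCohomology J i).map f =
      ((Ext R (ModuleCat.{u} R) i).flip.map f).app ((powersQuotient J).obj n) ≫
        (localCohomologyCocone J i N).ι.app n :=
  ((colimit.ι (localCohomology.diagram (localCohomology.idealPowersDiagram J) i) n).naturality
    f).symm

instance hasExactColimitsOfShape_moduleCat :
    HasExactColimitsOfShape ℕᵒᵖᵒᵖ (ModuleCat.{u} R) :=
  have := AB5OfSize_of_univLE.{0, 0, u, u} (ModuleCat.{u} R)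
  inferInstance

variable {S : ShortComplex (ModuleCat.{u} R)} (hS : S.ShortExact)

/-- The connecting morphism `H^i_J(S.X₃) ⟶ H^{i + 1}_J(S.X₁)`. -/
noncomputable def localCohomologyδ :
    (localCohomology J i).obj S.X₃ ⟶ (localCohomology J (i + 1)).obj S.X₁ :=
  (isColimitLocalCohomologyCocone J i S.X₃).map (localCohomologyCocone J (i + 1) S.X₁)
    (Functor.whiskerLeft (powersQuotient J) (extδ hS i))

lemma localCohomologyCocone_ι_comp_localCohomologyδ (n : ℕᵒᵖᵒᵖ) :
    (localCohomologyCocone J i S.X₃).ι.app n ≫ localCohomologyδ J i hS =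
      (extδ hS i).app ((powersQuotient J).obj n) ≫
        (localCohomologyCocone J (i + 1) S.X₁).ι.app n :=
  (isColimitLocalCohomologyCocone J i S.X₃).ι_map _ _ n

lemma exact_localCohomology_map_localCohomologyδ :
    Function.Exact ((localCohomology J i).map S.g) (localCohomologyδ J i hS) :=
  let T : ShortComplex (ℕᵒᵖᵒᵖ ⥤ ModuleCat.{u} R) :=
    (ShortComplex.mk _ _ (map_comp_extδ (R := R) hS i)).map
      ((Functor.whiskeringLeft _ _ _).obj (powersQuotient J))
  (ShortComplex.ShortExact.moduleCat_exact_iff_function_exact _).1 <|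
    colim.exact_mapShortComplex (S := T)
      (exact_of_exact_map_evaluation fun n ↦ exact_map_extδ hS i ((powersQuotient J).obj n))
      (isColimitLocalCohomologyCocone J i S.X₂) (isColimitLocalCohomologyCocone J i S.X₃)
      (isColimitLocalCohomologyCocone J (i + 1) S.X₁) _ _
      (localCohomologyCocone_ι_comp_map J i S.g)
      (localCohomologyCocone_ι_comp_localCohomologyδ J i hS)

lemma exact_localCohomologyδ_localCohomology_map :
    Function.Exact (localCohomologyδ J i hS) ((localCohomology J (i + 1)).map S.f) :=
  let T : ShortComplex (ℕᵒᵖᵒᵖ ⥤ ModuleCat.{u} R) :=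
    (ShortComplex.mk _ _ (extδ_comp_map (R := R) hS i)).map
      ((Functor.whiskeringLeft _ _ _).obj (powersQuotient J))
  (ShortComplex.ShortExact.moduleCat_exact_iff_function_exact _).1 <|
    colim.exact_mapShortComplex (S := T)
      (exact_of_exact_map_evaluation fun n ↦ exact_extδ_map hS i ((powersQuotient J).obj n))
      (isColimitLocalCohomologyCocone J i S.X₃) (isColimitLocalCohomologyCocone J (i + 1) S.X₁)
      (isColimitLocalCohomologyCocone J (i + 1) S.X₂) _ _
      (localCohomologyCocone_ι_comp_localCohomologyδ J i hS)
      (localCohomologyCocone_ι_comp_map J (i + 1) S.f)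

lemma subsingleton_localCohomology_succ_of_injective (E : ModuleCat.{u} R) [Injective E] :
    Subsingleton ((localCohomology J (i + 1)).obj E) :=
  ModuleCat.subsingleton_of_isZero <| (isColimitLocalCohomologyCocone J (i + 1) E).isZero_pt <|
    Functor.isZero _ fun n ↦ isZero_Ext_succ_of_injective i ((powersQuotient J).obj n).unop E

variable [Injective S.X₂]

lemma localCohomologyδ_surjective : Function.Surjective (localCohomologyδ J i hS) := fun z ↦
  have := subsingleton_localCohomology_succ_of_injective J i S.X₂
  (exact_localCohomologyδ_localCohomology_map J i hS z).1 (Subsingleton.elim _ _)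

include hS in
lemma subsingleton_localCohomology_succ_iff_surjective :
    Subsingleton ((localCohomology J (i + 1)).obj S.X₁) ↔
      Function.Surjective ((localCohomology J i).map S.g) := by
  have h := exact_localCohomology_map_localCohomologyδ J i hS
  refine ⟨fun _ z ↦ (h z).1 (Subsingleton.elim _ _), fun hg ↦ ⟨fun a b ↦ ?_⟩⟩
  have hδ (z) : localCohomologyδ J i hS z = 0 := (h z).2 (hg z)
  obtain ⟨a, rfl⟩ := localCohomologyδ_surjective J i hS a
  obtain ⟨b, rfl⟩ := localCohomologyδ_surjective J i hS b
  rw [hδ, hδ]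

include hS in
lemma subsingleton_localCohomology_succ_succ_iff :
    Subsingleton ((localCohomology J (i + 2)).obj S.X₁) ↔
      Subsingleton ((localCohomology J (i + 1)).obj S.X₃) := by
  have := subsingleton_localCohomology_succ_of_injective J i S.X₂
  rw [subsingleton_localCohomology_succ_iff_surjective J (i + 1) hS]
  exact ⟨fun h ↦ h.subsingleton, fun _ ↦ Function.surjective_to_subsingleton _⟩

end LocalCohomology

section Torsion

variable {R : Type u} [CommRing R]

/-- Evaluation at `a`, as a natural transformation `Hom(A, -) ⟶ 𝟭`. -/
noncomputable def linearCoyonedaEval (A : ModuleCat.{u} R) (a : A) :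
    (linearCoyoneda R (ModuleCat.{u} R)).obj (op A) ⟶ 𝟭 (ModuleCat.{u} R) where
  app _ := ModuleCat.ofHom (LinearMap.applyₗ a ∘ₗ ModuleCat.homLinearEquiv.toLinearMap)
  naturality _ _ _ := rfl

/-- The image of `1` in `R ⧸ I`, as an element of an object of `ModuleCat R`. -/
abbrev quotientOne (I : Ideal R) : ModuleCat.of R (R ⧸ I) := Submodule.Quotient.mk 1

lemma linearCoyonedaEval_quotientOne_injective (I : Ideal R) (N : ModuleCat.{u} R) :
    Function.Injective ((linearCoyonedaEval _ (quotientOne I)).app N) := fun _ _ h ↦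
  ModuleCat.hom_ext <| Submodule.linearMap_qext _ <| LinearMap.ext_ring h

lemma exists_linearCoyonedaEval_quotientOne_eq_iff {I : Ideal R} {N : ModuleCat.{u} R} {y : N} :
    (∃ φ, (linearCoyonedaEval _ (quotientOne I)).app N φ = y) ↔
      y ∈ Submodule.torsionBySet R N I := by
  rw [Submodule.mem_torsionBySet_iff]
  constructor
  · rintro ⟨φ : ModuleCat.of R (R ⧸ I) ⟶ N, rfl⟩ a
    have ha : (a : R) • quotientOne I = 0 :=
      (Submodule.Quotient.mk_eq_zero I).2 (I.mul_mem_right 1 a.2)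
    exact (φ.hom.map_smul _ _).symm.trans ((congrArg φ.hom ha).trans (map_zero _))
  · intro h
    exact ⟨ModuleCat.ofHom (Submodule.liftQ I (LinearMap.toSpanSingleton R N y)
      fun a ha ↦ h ⟨a, ha⟩), one_smul R y⟩

variable (J : Ideal R)

/-- The cocone of evaluations at `1` of morphisms `R ⧸ J ^ n ⟶ M`, with `Hom` regarded as
`Ext^0`. -/
noncomputable def quotientOneCocone :
    Cocone (localCohomology.diagram (localCohomology.idealPowersDiagram J) 0) where
  pt := 𝟭 (ModuleCat.{u} R)
  ι :=
    { app n := (linearCoyonedaIsoExtZero R (ModuleCat.{u} R)).inv.app ((powersQuotient J).obj n) ≫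
        linearCoyonedaEval _ (quotientOne (J ^ n.unop.unop))
      naturality _ m f := congrArg (· ≫ linearCoyonedaEval _ (quotientOne (J ^ m.unop.unop)))
        ((linearCoyonedaIsoExtZero R (ModuleCat.{u} R)).inv.naturality ((powersQuotient J).map f)) }

/-- The natural transformation from `H^0_J` to the identity. -/
noncomputable def localCohomologyZeroToId : localCohomology J 0 ⟶ 𝟭 (ModuleCat.{u} R) :=
  (colimit.isColimit _).desc (quotientOneCocone J)

lemma localCohomologyCocone_ι_comp_localCohomologyZeroToId_app (N : ModuleCat.{u} R)
    (n : ℕᵒᵖᵒᵖ) :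
    (localCohomologyCocone J 0 N).ι.app n ≫ (localCohomologyZeroToId J).app N =
      ((linearCoyonedaIsoExtZero R (ModuleCat.{u} R)).inv.app ((powersQuotient J).obj n)).app N ≫
        (linearCoyonedaEval _ (quotientOne (J ^ n.unop.unop))).app N :=
  congr_app ((colimit.isColimit _).fac (quotientOneCocone J) n) N

instance preservesColimit_forget_localCohomology (i : ℕ) (N : ModuleCat.{u} R) :
    PreservesColimit (powersQuotient J ⋙ (Ext R (ModuleCat.{u} R) i).flip.obj N)
      (forget (ModuleCat.{u} R)) :=
  have : PreservesFilteredColimitsOfSize.{0, 0} (forget (ModuleCat.{u} R)) :=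
    preservesFilteredColimitsOfSize_shrink.{0, u, 0, u} _
  inferInstance

lemma localCohomologyZeroToId_app_injective (N : ModuleCat.{u} R) :
    Function.Injective ((localCohomologyZeroToId J).app N) := by
  refine (injective_iff_map_eq_zero _).2 fun z hz ↦ ?_
  obtain ⟨n, w, rfl⟩ := Concrete.isColimit_exists_rep _ (isColimitLocalCohomologyCocone J 0 N) z
  have h : Function.Injective
      (((linearCoyonedaIsoExtZero R (ModuleCat.{u} R)).inv.app ((powersQuotient J).obj n)).app N ≫
        (linearCoyonedaEval _ (quotientOne (J ^ n.unop.unop))).app N) :=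
    (linearCoyonedaEval_quotientOne_injective _ N).comp (ConcreteCategory.bijective_of_isIso _).1
  rw [(injective_iff_map_eq_zero _).1 h w ((ConcreteCategory.congr_hom
    (localCohomologyCocone_ι_comp_localCohomologyZeroToId_app J N n) w).symm.trans hz)]
  exact map_zero _

lemma range_localCohomologyZeroToId_app (N : ModuleCat.{u} R) :
    LinearMap.range ((localCohomologyZeroToId J).app N).hom = Ideal.primaryComponent N J := by
  refine Submodule.ext fun (y : N) ↦ LinearMap.mem_range.trans <|
    Iff.trans ?_ (Ideal.primaryComponent_mem _ _ y).symm
  have h (n : ℕᵒᵖᵒᵖ) := ConcreteCategory.congr_hom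
    (localCohomologyCocone_ι_comp_localCohomologyZeroToId_app J N n)
  simp only [← exists_linearCoyonedaEval_quotientOne_eq_iff]
  constructor
  · rintro ⟨z, rfl⟩
    obtain ⟨n, w, rfl⟩ := Concrete.isColimit_exists_rep _ (isColimitLocalCohomologyCocone J 0 N) z
    exact ⟨n.unop.unop, _, (h n w).symm⟩
  · rintro ⟨n, φ, rfl⟩
    have h' : Function.Surjective (((linearCoyonedaIsoExtZero R (ModuleCat.{u} R)).inv.app
      ((powersQuotient J).obj (op (op n)))).app N) := (ConcreteCategory.bijective_of_isIso _).2
    obtain ⟨w, rfl⟩ := h' φ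
    exact ⟨_, h (op (op n)) w⟩

/-- `H^0_J(N)` is the `J`-power torsion of `N`. -/
noncomputable def localCohomologyZeroEquiv (N : ModuleCat.{u} R) :
    (localCohomology J 0).obj N ≃ₗ[R] Ideal.primaryComponent N J :=
  (LinearEquiv.ofInjective ((localCohomologyZeroToId J).app N).hom
    (localCohomologyZeroToId_app_injective J N)).trans
    (LinearEquiv.ofEq _ _ (range_localCohomologyZeroToId_app J N))

lemma coe_localCohomologyZeroEquiv_map {M N : ModuleCat.{u} R} (f : M ⟶ N)
    (z : (localCohomology J 0).obj M) :
    (localCohomologyZeroEquiv J N ((localCohomology J 0).map f z) : N) =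
      f (localCohomologyZeroEquiv J M z) :=
  ConcreteCategory.congr_hom ((localCohomologyZeroToId J).naturality f) z

lemma subsingleton_localCohomology_one_iff {S : ShortComplex (ModuleCat.{u} R)}
    (hS : S.ShortExact) [Injective S.X₂] :
    Subsingleton ((localCohomology J 1).obj S.X₁) ↔
      ∀ y ∈ Ideal.primaryComponent S.X₃ J, ∃ e ∈ Ideal.primaryComponent S.X₂ J, S.g e = y := by
  rw [subsingleton_localCohomology_succ_iff_surjective J 0 hS]
  constructor
  · intro h y hy
    obtain ⟨z, hz⟩ := h ((localCohomologyZeroEquiv J S.X₃).symm ⟨y, hy⟩)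
    refine ⟨_, (localCohomologyZeroEquiv J S.X₂ z).2, ?_⟩
    rw [← coe_localCohomologyZeroEquiv_map, hz, LinearEquiv.apply_symm_apply]
  · intro h z
    obtain ⟨e, he, hez⟩ := h _ (localCohomologyZeroEquiv J S.X₃ z).2
    refine ⟨(localCohomologyZeroEquiv J S.X₂).symm ⟨e, he⟩,
      (localCohomologyZeroEquiv J S.X₃).injective (Subtype.ext ?_)⟩
    rw [coe_localCohomologyZeroEquiv_map, LinearEquiv.apply_symm_apply, hez]

end Torsion

section QuasiDivisible

/-- Every element `y` satisfies `x ^ l • y ∈ x ^ (l + 1) • N` for some `l`. Equivalently, the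
localization map from `N` to `N` with `x` inverted is surjective, that is, `H^1_(x)(N) = 0`. -/
def IsQuasiDivisible {R : Type*} [CommRing R] (x : R) (N : Type*) [AddCommGroup N] [Module R N] :
    Prop :=
  ∀ y : N, ∃ (l : ℕ) (z : N), x ^ l • y = x ^ (l + 1) • z

section

variable {R : Type*} [CommRing R] {x : R} {A B C : Type*} [AddCommGroup A] [Module R A]
  [AddCommGroup B] [Module R B] [AddCommGroup C] [Module R C]

lemma IsQuasiDivisible.exists_pow_add (h : IsQuasiDivisible x A) (k : ℕ) (y : A) :
    ∃ (l : ℕ) (z : A), x ^ l • y = x ^ (l + k) • z := by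
  induction k with
  | zero => exact ⟨0, y, rfl⟩
  | succ k ih =>
    obtain ⟨l, z, hz⟩ := ih
    obtain ⟨m, w, hw⟩ := h z
    refine ⟨m + l, w, ?_⟩
    rw [pow_add, mul_smul, hz, smul_comm, hw, smul_smul, ← pow_add]
    congr 2
    omega

lemma IsQuasiDivisible.of_equiv (h : IsQuasiDivisible x A) (e : A ≃ₗ[R] B) :
    IsQuasiDivisible x B := fun y ↦ by
  obtain ⟨l, z, hz⟩ := h (e.symm y)
  refine ⟨l, e z, e.symm.injective ?_⟩
  rw [map_smul, hz, map_smul, e.symm_apply_apply]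

lemma IsQuasiDivisible.of_exact {f : A →ₗ[R] B} {g : B →ₗ[R] C} (hfg : Function.Exact f g)
    (hg : Function.Surjective g) (hA : IsQuasiDivisible x A) (hC : IsQuasiDivisible x C) :
    IsQuasiDivisible x B := by
  intro y
  obtain ⟨l, z, hz⟩ := hC (g y)
  obtain ⟨z, rfl⟩ := hg z
  obtain ⟨a, ha⟩ := (hfg (x ^ l • (y - x • z))).1 <| by
    rw [map_smul, map_sub, map_smul, smul_sub, hz, smul_smul, ← pow_succ, sub_self]
  obtain ⟨m, w, hw⟩ := hA.exists_pow_add (l + 1) a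
  refine ⟨m + l, z + f w, ?_⟩
  have h : x ^ m • (x ^ l • (y - x • z)) = x ^ (m + (l + 1)) • f w := by
    rw [← ha, ← map_smul, ← map_smul, hw]
  rw [smul_smul, ← pow_add, smul_sub, smul_smul, ← pow_succ, sub_eq_iff_eq_add] at h
  rw [h, smul_add, add_comm, ← add_assoc m l 1]

lemma isQuasiDivisible_of_isArtinian (x : R) (N : Type*) [AddCommGroup N] [Module R N]
    [IsArtinian R N] : IsQuasiDivisible x N := fun y ↦
  let ⟨l, z, hz⟩ := IsArtinian.exists_pow_succ_smul_dvd x y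
  ⟨l, z, hz.symm⟩

end

variable {R : Type u} [CommRing R]

/-- Once the kernels of the powers of `x` on `A` stabilize, `x ^ k • φ` factors through
multiplication by `x ^ (k + 1)` on `A`. -/
lemma isQuasiDivisible_hom_of_injective (x : R) (A E : ModuleCat.{u} R) [IsNoetherian R A]
    [Injective E] : IsQuasiDivisible x (A ⟶ E) := by
  intro φ
  let μ : Module.End R A := algebraMap R (Module.End R A) x
  obtain ⟨k, hk⟩ := monotone_stabilizes_iff_noetherian.2 ‹IsNoetherian R A› μ.iterateKer
  let T : ShortComplex (ModuleCat.{u} R) :=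
    ShortComplex.mk (ModuleCat.ofHom (LinearMap.ker (μ ^ (k + 1))).subtype)
      (ModuleCat.ofHom (μ ^ (k + 1))) (by ext a; exact a.2)
  have hT : T.Exact := (ShortComplex.moduleCat_exact_iff T).2 fun a ha ↦ ⟨⟨a, ha⟩, rfl⟩
  have hμ (j : ℕ) (a : A) : (μ ^ j) a = x ^ j • a := by
    rw [← map_pow, Module.algebraMap_end_apply]
  let ψ : A ⟶ E := x ^ k • φ
  have hψ : T.f ≫ ψ = 0 := by
    ext ⟨a, ha⟩
    have ha' : (μ ^ k) a = 0 := (hk (k + 1) k.le_succ).ge ha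
    change x ^ k • φ a = 0
    rw [← map_smul φ.hom, ← hμ, ha', map_zero]
  refine ⟨k, hT.descToInjective ψ hψ, ?_⟩
  ext a
  have h := ConcreteCategory.congr_hom (hT.comp_descToInjective ψ hψ) a
  exact h.symm.trans <|
    (congrArg _ (hμ (k + 1) a)).trans (map_smul (hT.descToInjective ψ hψ).hom _ _)

lemma isQuasiDivisible_primaryComponent_of_injective [IsNoetherianRing R] (J : Ideal R) (x : R)
    (E : ModuleCat.{u} R) [Injective E] : IsQuasiDivisible x (Ideal.primaryComponent E J) := by
  rintro ⟨y, hy⟩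
  obtain ⟨n, hn⟩ := (Ideal.primaryComponent_mem _ _ y).1 hy
  obtain ⟨φ, rfl⟩ := exists_linearCoyonedaEval_quotientOne_eq_iff.2 hn
  obtain ⟨l, ψ, h⟩ := isQuasiDivisible_hom_of_injective x _ E φ
  refine ⟨l, ⟨(linearCoyonedaEval _ (quotientOne (J ^ n))).app E ψ,
    (Ideal.primaryComponent_mem _ _ _).2
      ⟨n, exists_linearCoyonedaEval_quotientOne_eq_iff.1 ⟨ψ, rfl⟩⟩⟩, Subtype.ext ?_⟩
  exact congrArg ((linearCoyonedaEval _ (quotientOne (J ^ n))).app E) h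

lemma isQuasiDivisible_localCohomology_of_injective [IsNoetherianRing R] (J : Ideal R) (x : R)
    (i : ℕ) (E : ModuleCat.{u} R) [Injective E] :
    IsQuasiDivisible x ((localCohomology J i).obj E) := by
  cases i with
  | zero =>
    exact IsQuasiDivisible.of_equiv (isQuasiDivisible_primaryComponent_of_injective J x E)
      (localCohomologyZeroEquiv J E).symm
  | succ i =>
    have := subsingleton_localCohomology_succ_of_injective J i E
    exact isQuasiDivisible_of_isArtinian x _

end QuasiDivisible

section EnlargingTheIdeal

lemma mem_primaryComponent_sup_span {R N : Type*} [CommRing R] [AddCommGroup N] [Module R N]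
    {J : Ideal R} {x : R} {y : N} :
    y ∈ Ideal.primaryComponent N (J ⊔ Ideal.span {x}) ↔
      y ∈ Ideal.primaryComponent N J ∧ ∃ k : ℕ, x ^ k • y = 0 := by
  simp only [Ideal.primaryComponent_mem, Submodule.mem_torsionBySet_iff, Subtype.forall,
    SetLike.mem_coe]
  constructor
  · rintro ⟨n, hn⟩
    exact ⟨⟨n, fun a ha ↦ hn a (Ideal.pow_right_mono le_sup_left n ha)⟩, n,
      hn _ (Ideal.pow_mem_pow (Ideal.mem_sup_right (Ideal.mem_span_singleton_self x)) n)⟩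
  · rintro ⟨⟨n, hn⟩, k, hk⟩
    refine ⟨n + k, fun a ha ↦ ?_⟩
    obtain ⟨b, hb, c, hc, rfl⟩ := Submodule.mem_sup.1 (Ideal.sup_pow_add_le_pow_sup_pow ha)
    rw [Ideal.span_singleton_pow, Ideal.mem_span_singleton'] at hc
    obtain ⟨r, rfl⟩ := hc
    rw [add_smul, hn b hb, mul_smul, hk, smul_zero, add_zero]

variable {R : Type u} [CommRing R]

lemma exists_shortExact_injective (M : ModuleCat.{u} R) :
    ∃ (E N : ModuleCat.{u} R) (f : M ⟶ E) (g : E ⟶ N) (w : f ≫ g = 0),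
      Injective E ∧ (ShortComplex.mk f g w).ShortExact :=
  ⟨_, _, Injective.ι M, cokernel.π _, cokernel.condition _, inferInstance,
    { exact := ShortComplex.exact_cokernel _ }⟩

lemma subsingleton_localCohomology_one_sup_span {S : ShortComplex (ModuleCat.{u} R)}
    (hS : S.ShortExact) [Injective S.X₂] {J : Ideal R} {x : R}
    (h : Subsingleton ((localCohomology J 1).obj S.X₁))
    (hx : IsQuasiDivisible x (Ideal.primaryComponent S.X₁ J)) :
    Subsingleton ((localCohomology (J ⊔ Ideal.span {x}) 1).obj S.X₁) := by
  rw [subsingleton_localCohomology_one_iff _ hS] at h ⊢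
  intro y hy
  obtain ⟨hyJ, k, hk⟩ := mem_primaryComponent_sup_span.1 hy
  obtain ⟨e, heJ, rfl⟩ := h y hyJ
  obtain ⟨m, hm⟩ := (ShortComplex.moduleCat_exact_iff S).1 hS.exact (x ^ k • e)
    (by rw [map_smul, hk])
  have hmJ : m ∈ Ideal.primaryComponent S.X₁ J := by
    obtain ⟨n, hn⟩ := (Ideal.primaryComponent_mem _ _ e).1 heJ
    rw [Submodule.mem_torsionBySet_iff] at hn
    refine (Ideal.primaryComponent_mem _ _ m).2 ⟨n, (Submodule.mem_torsionBySet_iff _ _).2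
      fun a ↦ (ModuleCat.mono_iff_injective S.f).1 hS.mono_f ?_⟩
    change S.f ((a : R) • m) = _
    rw [map_smul, hm, smul_comm, hn a, smul_zero, map_zero]
  obtain ⟨l, z, hz⟩ := hx.exists_pow_add k ⟨m, hmJ⟩
  have hz : x ^ l • m = x ^ (l + k) • (z : S.X₁) := congrArg Subtype.val hz
  refine ⟨e - S.f z, mem_primaryComponent_sup_span.2
    ⟨sub_mem heJ (Ideal.primaryComponent_map_mem J S.f.hom z), l + k, ?_⟩, ?_⟩
  · rw [smul_sub, ← map_smul, ← hz, map_smul, hm, smul_smul, ← pow_add, sub_self]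
  · rw [map_sub, ← ConcreteCategory.comp_apply S.f S.g, S.zero]
    exact sub_zero _

theorem subsingleton_localCohomology_succ_sup_span [IsNoetherianRing R] {J : Ideal R} {x : R}
    (i : ℕ) {M : ModuleCat.{u} R} (h : Subsingleton ((localCohomology J (i + 1)).obj M))
    (hx : IsQuasiDivisible x ((localCohomology J i).obj M)) :
    Subsingleton ((localCohomology (J ⊔ Ideal.span {x}) (i + 1)).obj M) := by
  induction i generalizing M with
  | zero =>
    obtain ⟨E, N, f, g, w, hE, hS⟩ := exists_shortExact_injective M
    exact subsingleton_localCohomology_one_sup_span hS h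
      (hx.of_equiv (localCohomologyZeroEquiv J M))
  | succ i ih =>
    obtain ⟨E, N, f, g, w, hE, hS⟩ := exists_shortExact_injective M
    have hN : IsQuasiDivisible x ((localCohomology J i).obj N) :=
      .of_exact (exact_localCohomology_map_localCohomologyδ J i hS)
        (localCohomologyδ_surjective J i hS)
        (isQuasiDivisible_localCohomology_of_injective J x i E) hx
    exact (subsingleton_localCohomology_succ_succ_iff _ i hS).2
      (ih ((subsingleton_localCohomology_succ_succ_iff J i hS).1 h) hN)

lemma subsingleton_localCohomology_bot_succ (i : ℕ) (M : ModuleCat.{u} R) :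
    Subsingleton ((localCohomology (⊥ : Ideal R) (i + 1)).obj M) := by
  induction i generalizing M with
  | zero =>
    obtain ⟨E, N, f, g, w, hE, hS⟩ := exists_shortExact_injective M
    refine (subsingleton_localCohomology_one_iff ⊥ hS).2 fun y _ ↦ ?_
    obtain ⟨e, he⟩ := (ModuleCat.epi_iff_surjective g).1 hS.epi_g y
    refine ⟨e, (Ideal.primaryComponent_mem _ _ e).2 ⟨1, ?_⟩, he⟩
    simp
  | succ i ih =>
    obtain ⟨E, N, f, g, w, hE, hS⟩ := exists_shortExact_injective M
    exact (subsingleton_localCohomology_succ_succ_iff _ i hS).2 (ih N)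

end EnlargingTheIdeal

end

section CohomologicalDimension

variable {R : Type u} [CommRing R] {I J : Ideal R} {M : ModuleCat.{u} R}

lemma cohomologicalDimension_le_iff {c : ℕ} : cohomologicalDimension I M ≤ c ↔
    ∀ i > c, Subsingleton ((localCohomology I i).obj M) := by
  rw [cohomologicalDimension, sSup_le_iff]
  constructor
  · intro h i hi
    by_contra hn
    exact hi.not_ge (Nat.cast_le.1 (h _ ⟨i, rfl, not_subsingleton_iff_nontrivial.1 hn⟩))
  · rintro h _ ⟨i, rfl, hi⟩
    by_contra hn
    exact not_subsingleton_iff_nontrivial.2 hi (h i (by simpa only [Nat.cast_le, not_le] using hn))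

lemma le_cohomologicalDimension (i : ℕ) [h : Nontrivial ((localCohomology I i).obj M)] :
    (i : ℕ∞) ≤ cohomologicalDimension I M :=
  le_sSup ⟨i, rfl, h⟩

lemma cohomologicalDimension_bot_le (M : ModuleCat.{u} R) :
    cohomologicalDimension (⊥ : Ideal R) M ≤ (0 : ℕ) :=
  cohomologicalDimension_le_iff.2 fun i hi ↦ by
    obtain ⟨i, rfl⟩ := Nat.exists_eq_succ_of_ne_zero hi.ne'
    exact subsingleton_localCohomology_bot_succ i M

lemma cohomologicalDimension_sup_span_le [IsNoetherianRing R] {x : R} {c : ℕ}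
    (hJ : cohomologicalDimension J M ≤ c)
    (hx : IsQuasiDivisible x ((localCohomology J c).obj M)) :
    cohomologicalDimension (J ⊔ Ideal.span {x}) M ≤ c := by
  rw [cohomologicalDimension_le_iff] at hJ ⊢
  intro i hi
  obtain ⟨i, rfl⟩ := Nat.exists_eq_succ_of_ne_zero (Nat.ne_zero_of_lt hi)
  refine subsingleton_localCohomology_succ_sup_span i (hJ _ hi) ?_
  obtain rfl | hci := (Nat.lt_succ_iff.1 hi).eq_or_lt
  · exact hx
  · have := hJ i hci
    exact isQuasiDivisible_of_isArtinian x _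

lemma exists_lt_cohomologicalDimension_eq [IsNoetherianRing R] {c : ℕ}
    (hI : cohomologicalDimension I M = (c + 1 : ℕ)) :
    ∃ J < I, cohomologicalDimension J M = c ∧ ¬ IsArtinian R ((localCohomology J c).obj M) := by
  obtain ⟨J, ⟨hJI, hJ⟩, hmax⟩ := set_has_maximal_iff_noetherian.2 ‹IsNoetherianRing R›
    {J : Ideal R | J ≤ I ∧ cohomologicalDimension J M ≤ c}
    ⟨⊥, bot_le, (cohomologicalDimension_bot_le M).trans (Nat.cast_le.2 c.zero_le)⟩
  have hlt : J < I := hJI.lt_of_ne <| by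
    rintro rfl
    exact Nat.not_succ_le_self c (Nat.cast_le.1 (hI.ge.trans hJ))
  have hna : ¬ IsArtinian R ((localCohomology J c).obj M) := fun _ ↦ by
    obtain ⟨x, hxI, hxJ⟩ := SetLike.exists_of_lt hlt
    exact hmax (J ⊔ Ideal.span {x})
      ⟨sup_le hJI ((Ideal.span_singleton_le_iff_mem _).2 hxI),
        cohomologicalDimension_sup_span_le hJ (isQuasiDivisible_of_isArtinian x _)⟩
      (left_lt_sup.2 fun h ↦ hxJ ((Ideal.span_singleton_le_iff_mem _).1 h))
  have : Nontrivial ((localCohomology J c).obj M) := by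
    by_contra h
    have := not_nontrivial_iff_subsingleton.1 h
    exact hna inferInstance
  exact ⟨J, hlt, hJ.antisymm (le_cohomologicalDimension c), hna⟩

end CohomologicalDimension

lemma exists_chain_of_forall_exists_lt {α : Type*} [LT α] {P Q : ℕ → α → Prop}
    (h : ∀ n a, P (n + 1) a → ∃ b < a, P n b ∧ Q n b) (c : ℕ) (a : α) (ha : P c a) :
    ∃ J : ℕ → α, J c = a ∧ (∀ i < c, J i < J (i + 1)) ∧ (∀ i ≤ c, P i (J i)) ∧
      ∀ i < c, Q i (J i) := by
  induction c generalizing a with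
  | zero =>
    exact ⟨fun _ ↦ a, rfl, fun i hi ↦ absurd hi i.not_lt_zero,
      fun i hi ↦ (Nat.le_zero.1 hi).symm ▸ ha, fun i hi ↦ absurd hi i.not_lt_zero⟩
  | succ c ih =>
    obtain ⟨b, hba, hPb, hQb⟩ := h c a ha
    obtain ⟨J, rfl, hlt, hP, hQ⟩ := ih b hPb
    have hJ {i : ℕ} (hi : i ≤ c) : Function.update J (c + 1) a i = J i :=
      Function.update_of_ne (by lia) _ _
    refine ⟨Function.update J (c + 1) a, Function.update_self _ _ _, fun i hi ↦ ?_,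
      fun i hi ↦ ?_, fun i hi ↦ ?_⟩
    · obtain rfl | hi' := (Nat.lt_succ_iff.1 hi).eq_or_lt
      · rwa [hJ le_rfl, Function.update_self]
      · rw [hJ hi'.le, hJ hi']
        exact hlt i hi'
    · obtain rfl | hi' := hi.eq_or_lt
      · rwa [Function.update_self]
      · rw [hJ (Nat.lt_succ_iff.1 hi')]
        exact hP i (Nat.lt_succ_iff.1 hi')
    · rw [hJ (Nat.lt_succ_iff.1 hi)]
      obtain rfl | hi' := (Nat.lt_succ_iff.1 hi).eq_or_lt
      · exact hQb
      · exact hQ i hi'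

/-- if `cd(I,M) = c > 0`, there is a descending chain of ideals
`I = I_c ⊋ I_{c-1} ⊋ ⋯ ⊋ I_0` with `cd(I_i, M) = i` for all `0 ≤ i ≤ c`, and moreover
`H^i_{I_i}(M)` is not Artinian for all `0 ≤ i ≤ c - 1`. -/
theorem descending_chain_with_non_artinian_top_local_cohomology
    (R : Type u) [CommRing R] [IsNoetherianRing R] (I : Ideal R) (M : ModuleCat.{u} R)
    (c : ℕ) (hc : 0 < c) (hcd : cohomologicalDimension I M = (c : ℕ∞)) :
    ∃ J : ℕ → Ideal R, J c = I ∧ (∀ i < c, J i < J (i + 1)) ∧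
      (∀ i ≤ c, cohomologicalDimension (J i) M = (i : ℕ∞)) ∧
      ∀ i < c, ¬ IsArtinian R ((localCohomology (J i) i).obj M) :=
  exists_chain_of_forall_exists_lt (P := fun i J ↦ cohomologicalDimension J M = i)
    (fun _ _ ↦ exists_lt_cohomologicalDimension_eq) c I hcd
end

section
/- Let R be a commutative Noetherian ring with unity, M an R-module (not necessarily finitely generated), and I an ideal of R with dim(R/(I + Ann M)) = d, where Ann M is the annihilator of M. Let t ≥ 0 be an integer. If there exists an ideal J of R such that the local cohomology module H^{d+t}_{I+J}(M) is nonzero, then t ≤ cd(I,M). -/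
/-!
`H^i_K(M)` is the `i`-th cohomology of the complex `Γ_K(E)` of `K`-power torsion elements in an
injective resolution `E` of `M`, that is, `R^i Γ_K(M)`. Enlarge `K` by one element `x` and let `p`
be a prime of the support of `R^{j+1} Γ_{K+(x)}(M)`. Suppose that no prime `q ≤ p` with `x ∉ q`
supports `R^j Γ_K(M)`. Then, up to an element outside `p`, a cocycle of `Γ_{K+(x)}(E)` which bounds
in `Γ_K(E)` already bounds in `Γ_{K+(x)}(E)`, so `p` supports `R^{j+1} Γ_K(M)`. In other words, `p`
supports `R^{j+1} Γ_K(M)` or strictly contains a prime supporting `R^j Γ_K(M)`. Going from `I + J`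
down to `I` one generator at a time, each cohomological degree lost costs one step of a chain of
primes containing `I + Ann M`, and such a chain has at most `d` steps.
-/

universe u

open CategoryTheory

section Homology

universe v

variable {R : Type*} [Ring R] {ι : Type*} {c : ComplexShape ι}
  (L : HomologicalComplex (ModuleCat.{v} R) c)

lemma homologyπ_surjective (i : ι) : Function.Surjective (L.homologyπ i) :=
  (ModuleCat.epi_iff_surjective _).mp inferInstance

lemma homologyπ_eq_zero_iff {i j : ι} (hi : c.prev j = i) (z : L.cycles j) :
    L.homologyπ j z = 0 ↔ ∃ y : L.X i, L.d i j y = L.iCycles j z := by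
  have hj : Function.Injective (L.iCycles j) := (ModuleCat.mono_iff_injective _).mp inferInstance
  have exact := (ShortComplex.moduleCat_exact_iff _).mp (ShortComplex.exact_of_g_is_cokernel
    (.mk _ _ (L.toCycles_comp_homologyπ i j)) (L.homologyIsCokernel i j hi))
  have toCycles_i (y : L.X i) : L.iCycles j (L.toCycles i j y) = L.d i j y :=
    congr($(L.toCycles_i i j) y)
  constructor
  · intro hz
    obtain ⟨y, rfl⟩ := exact z hz
    exact ⟨y, (toCycles_i y).symm⟩
  · rintro ⟨y, hy⟩
    obtain rfl : L.toCycles i j y = z := hj ((toCycles_i y).trans hy)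
    exact congr($(L.toCycles_comp_homologyπ i j) y)

lemma exists_iCycles_eq {j k : ι} (hk : c.next j = k) {z : L.X j} (hz : L.d j k z = 0) :
    ∃ w : L.cycles j, L.iCycles j w = z :=
  ⟨L.cyclesMk z k hk hz, L.i_cyclesMk z k hk hz⟩

lemma d_iCycles_apply (j k : ι) (w : L.cycles j) : L.d j k (L.iCycles j w) = 0 :=
  congr($(L.iCycles_d j k) w)

lemma forall_homology_exists_smul_eq_zero_iff {i j k : ι} (hi : c.prev j = i) (hk : c.next j = k)
    (S : Set R) :
    (∀ m : L.homology j, ∃ s ∈ S, s • m = 0) ↔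
      ∀ z : L.X j, L.d j k z = 0 → ∃ s ∈ S, ∃ y : L.X i, L.d i j y = s • z := by
  rw [(homologyπ_surjective L j).forall]
  simp only [← map_smul, homologyπ_eq_zero_iff L hi]
  simp only [map_smul]
  constructor
  · intro h z hz
    obtain ⟨w, rfl⟩ := exists_iCycles_eq L hk hz
    exact h w
  · exact fun h w ↦ h _ (d_iCycles_apply L j k w)

end Homology

section Linear

variable {S C : Type*} [Semiring S] [Category* C]

instance linear_homologyFunctor [Preadditive C] [CategoryWithHomology C] [Linear S C] {ι : Type*}
    (c : ComplexShape ι) (i : ι) :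
    (HomologicalComplex.homologyFunctor C c i).Linear S where
  map_smul φ s :=
    ShortComplex.homologyMap_smul ((HomologicalComplex.shortComplexFunctor C c i).map φ) s

instance linear_rightDerived [Abelian C] [Linear S C] {D : Type*} [Category* D] [Abelian D]
    [Linear S D] [HasInjectiveResolutions C] (F : C ⥤ D) [F.Additive] [F.Linear S] (n : ℕ) :
    (F.rightDerived n).Linear S where
  map_smul {X Y} f s := by
    let E := injectiveResolution X
    let E' := injectiveResolution Y
    let φ := InjectiveResolution.desc f E' E
    have hφ : E.ι ≫ φ = (CochainComplex.single₀ C).map f ≫ E'.ι :=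
      InjectiveResolution.desc_commutes f E' E
    have hsφ : E.ι ≫ (s • φ) = (CochainComplex.single₀ C).map (s • f) ≫ E'.ι := by
      rw [Linear.comp_smul, hφ]
      ext
      simp only [HomologicalComplex.smul_f_apply, HomologicalComplex.comp_f,
        CochainComplex.single₀_map_f_zero]
      exact (Linear.smul_comp _ _ _ s f (E'.ι.f 0)).symm
    rw [F.rightDerived_map_eq n _ _ hsφ, F.rightDerived_map_eq n _ _ hφ, Functor.map_smul,
      Linear.smul_comp, Linear.comp_smul]

lemma annihilator_le_annihilator_obj {R : Type u} [CommRing R]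
    (F : ModuleCat.{u} R ⥤ ModuleCat.{u} R) [F.Linear R] (M : ModuleCat.{u} R) :
    Module.annihilator R M ≤ Module.annihilator R (F.obj M) := by
  intro r hr
  have smul_id : r • 𝟙 M = (0 : R) • 𝟙 M := by
    ext m
    exact (Module.mem_annihilator.mp hr m).trans (zero_smul R m).symm
  have smul_id_obj : r • 𝟙 (F.obj M) = (0 : R) • 𝟙 (F.obj M) := by
    rw [← F.map_id, ← F.map_smul, smul_id, F.map_smul]
  exact Module.mem_annihilator.mpr fun m ↦ congr($smul_id_obj m).trans (zero_smul R m)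

end Linear

section ExtMk

open CategoryTheory.Abelian Limits CochainComplex.HomComplex

universe w

variable {C : Type*} [Category* C] [Abelian C] [HasExt.{w} C] {X Y : C}

lemma projective_extMk_zero_eq_zero_iff (P : ProjectiveResolution X) (f : P.complex.X 0 ⟶ Y)
    (hf : P.complex.d 1 0 ≫ f = 0) : P.extMk f 1 rfl hf = 0 ↔ f = 0 := by
  rw [← P.extEquivCohomologyClass.apply_eq_iff_eq, P.extEquivCohomologyClass_extMk,
    P.extEquivCohomologyClass_zero, CohomologyClass.mk_eq_zero_iff,
    Cocycle.toSingleMk_mem_coboundaries_iff _ _ _ _ _ 1 (by lia)]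
  have isZero_X_one := P.cochainComplex.isZero_of_isStrictlyLE 0 1
  constructor
  · rintro ⟨g, hg⟩
    rw [isZero_X_one.eq_of_src g 0, comp_zero] at hg
    exact (Preadditive.IsIso.comp_left_eq_zero _ _).mp hg.symm
  · rintro rfl
    exact ⟨0, by rw [comp_zero, comp_zero]⟩

lemma injective_extMk_zero_eq_zero_iff (E : InjectiveResolution Y) (f : X ⟶ E.cocomplex.X 0)
    (hf : f ≫ E.cocomplex.d 0 1 = 0) : E.extMk f 1 rfl hf = 0 ↔ f = 0 := by
  rw [← E.extEquivCohomologyClass.apply_eq_iff_eq, E.extEquivCohomologyClass_extMk,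
    E.extEquivCohomologyClass_zero, CohomologyClass.mk_eq_zero_iff,
    Cocycle.fromSingleMk_mem_coboundaries_iff _ _ _ _ _ (-1) (by lia)]
  have isZero_X_neg_one := E.cochainComplex.isZero_of_isStrictlyGE 0 (-1)
  constructor
  · rintro ⟨g, hg⟩
    rw [isZero_X_neg_one.eq_of_tgt g 0, zero_comp] at hg
    exact (Preadditive.IsIso.comp_right_eq_zero _ _).mp hg.symm
  · rintro rfl
    exact ⟨0, by rw [zero_comp, zero_comp]⟩

variable {i n : ℕ} (hi : (ComplexShape.up ℕ).prev n = i)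
include hi

lemma projective_extMk_eq_zero_iff (P : ProjectiveResolution X) (f : P.complex.X n ⟶ Y)
    (hf : P.complex.d (n + 1) n ≫ f = 0) :
    P.extMk f (n + 1) rfl hf = 0 ↔ ∃ g : P.complex.X i ⟶ Y, P.complex.d n i ≫ g = f := by
  obtain _ | n := n
  · obtain rfl : 0 = i := CochainComplex.prev_nat_zero.symm.trans hi
    refine (projective_extMk_zero_eq_zero_iff P f hf).trans ?_
    simp only [P.complex.shape 0 0 (by simp), zero_comp, exists_const, eq_comm]
  · exact P.extMk_eq_zero_iff f _ rfl hf i (by rw [← hi, CochainComplex.prev_nat_succ])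

lemma injective_extMk_eq_zero_iff (E : InjectiveResolution Y) (f : X ⟶ E.cocomplex.X n)
    (hf : f ≫ E.cocomplex.d n (n + 1) = 0) :
    E.extMk f (n + 1) rfl hf = 0 ↔ ∃ g : X ⟶ E.cocomplex.X i, g ≫ E.cocomplex.d i n = f := by
  obtain _ | n := n
  · obtain rfl : 0 = i := CochainComplex.prev_nat_zero.symm.trans hi
    refine (injective_extMk_zero_eq_zero_iff E f hf).trans ?_
    simp only [E.cocomplex.shape 0 0 (by simp), comp_zero, exists_const, eq_comm]
  · exact E.extMk_eq_zero_iff f _ rfl hf i (by rw [← hi, CochainComplex.prev_nat_succ])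

end ExtMk

section LinearYoneda

variable {C : Type*} [Category* C]

lemma homologyUnop_inv_naturality [Preadditive C] {ι : Type*} {c : ComplexShape ι}
    {K L : HomologicalComplex Cᵒᵖ c} (φ : K ⟶ L) (i : ι) [K.HasHomology i] [L.HasHomology i] :
    (HomologicalComplex.homologyMap φ i).unop ≫ (K.homologyUnop i).inv =
      (L.homologyUnop i).inv ≫
        HomologicalComplex.homologyMap ((HomologicalComplex.unopFunctor C c).map φ.op) i := by
  have h := HomologicalComplex.homologyOp_hom_naturality
    ((HomologicalComplex.unopFunctor C c).map φ.op) i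
  exact (Iso.comp_inv_eq (K.homologyUnop i)).mpr
    (((Iso.eq_inv_comp (L.homologyUnop i)).mpr (congrArg Quiver.Hom.unop h)).trans
      (Category.assoc _ _ _).symm)

variable [Abelian C] (S : Type*) [Ring S] [Linear S C]

/-- The map of cochain complexes `Hom(L, Y) ⟶ Hom(K, Y)` given by precomposition with a morphism
`K ⟶ L` of chain complexes. -/
noncomputable def linearYonedaObjMap {K L : ChainComplex C ℕ} (φ : K ⟶ L) (Y : C) :
    L.linearYonedaObj S Y ⟶ K.linearYonedaObj S Y :=
  (HomologicalComplex.unopFunctor _ _).map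
    ((((linearYoneda S C).obj Y).rightOp.mapHomologicalComplex _).map φ).op

variable [EnoughProjectives C] {X X' : C}

lemma isoExt_hom_naturality {P : ProjectiveResolution X} {P' : ProjectiveResolution X'}
    {g : X' ⟶ X} (φ : P'.Hom P g) (n : ℕ) (Y : C) :
    ((Ext S C n).map g.op).app Y ≫ (P'.isoExt n Y).hom =
      (P.isoExt n Y).hom ≫ HomologicalComplex.homologyMap (linearYonedaObjMap S φ.hom Y) n := by
  have comm : φ.hom.f 0 ≫ P.π.f 0 = P'.π.f 0 ≫ g :=
    φ.hom_f_zero_comp_π_f_zero.trans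
      (congrArg (P'.π.f 0 ≫ ·) (ChainComplex.single₀_map_f_zero g))
  have h := congrArg Quiver.Hom.unop (P'.isoLeftDerivedObj_inv_naturality g P φ.hom comm
    ((linearYoneda S C).obj Y).rightOp n)
  have h' := homologyUnop_inv_naturality
    ((((linearYoneda S C).obj Y).rightOp.mapHomologicalComplex _).map φ.hom) n
  change ((((linearYoneda S C).obj Y).rightOp.leftDerived n).map g).unop ≫
    ((P'.isoLeftDerivedObj _ n).inv.unop ≫ (HomologicalComplex.homologyUnop _ n).inv) =
    ((P.isoLeftDerivedObj _ n).inv.unop ≫ (HomologicalComplex.homologyUnop _ n).inv) ≫ _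
  rw [unop_comp, unop_comp] at h
  exact (Category.assoc _ _ _).symm.trans ((congrArg (· ≫ _) h).trans
    ((Category.assoc _ _ _).trans ((congrArg (_ ≫ ·) h').trans (Category.assoc _ _ _).symm)))

end LinearYoneda

section AbelianExt

universe w

variable {S : Type*} [Ring S] {C : Type*} [Category* C] [Abelian C] [Linear S C]
  [HasExt.{w} C] {X X' : C} (P : ProjectiveResolution X) (Y : C) (n : ℕ)

variable (S) in
/-- The class in `Abelian.Ext X Y n` of a cocycle `P_n ⟶ Y` on a projective resolution of `X`. -/
noncomputable def extOfCycles :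
    (P.complex.linearYonedaObj S Y).cycles n →+ Abelian.Ext X Y n where
  toFun c := P.extMk ((P.complex.linearYonedaObj S Y).iCycles n c) (n + 1) rfl
    (d_iCycles_apply (P.complex.linearYonedaObj S Y) n (n + 1) c)
  map_zero' := by
    simp only [map_zero]
    exact P.extMk_zero _ rfl
  map_add' c c' := by
    simp only [map_add]
    exact (P.add_extMk _ _ _ rfl _ _).symm

lemma extOfCycles_surjective : Function.Surjective (extOfCycles S P Y n) := by
  intro e
  obtain ⟨f, hf, rfl⟩ := P.extMk_surjective e (n + 1) rfl
  obtain ⟨c, rfl⟩ :=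
    exists_iCycles_eq (P.complex.linearYonedaObj S Y) (CochainComplex.next ℕ n) hf
  exact ⟨c, rfl⟩

lemma extOfCycles_eq_zero_iff (c : (P.complex.linearYonedaObj S Y).cycles n) :
    extOfCycles S P Y n c = 0 ↔ (P.complex.linearYonedaObj S Y).homologyπ n c = 0 :=
  (projective_extMk_eq_zero_iff rfl P _ (d_iCycles_apply _ n (n + 1) c)).trans
    (homologyπ_eq_zero_iff _ rfl c).symm

lemma extOfCycles_naturality {P' : ProjectiveResolution X'} {g : X' ⟶ X} (φ : P'.Hom P g)
    (c : (P.complex.linearYonedaObj S Y).cycles n) :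
    extOfCycles S P' Y n (HomologicalComplex.cyclesMap (linearYonedaObjMap S φ.hom Y) n c) =
      (Abelian.Ext.mk₀ g).comp (extOfCycles S P Y n c) (zero_add n) := by
  refine .trans ?_ (P.mk₀_comp_extMk _ _ rfl (d_iCycles_apply _ n (n + 1) c) φ).symm
  change P'.extMk _ (n + 1) rfl
    (d_iCycles_apply (P'.complex.linearYonedaObj S Y) n (n + 1) _) = _
  congr 1
  exact congr($(HomologicalComplex.cyclesMap_i (linearYonedaObjMap S φ.hom Y) n) c)

/-- The additive map from the `n`-th cohomology of `Hom(P, Y)` to `Abelian.Ext X Y n` induced by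
`extOfCycles`. -/
noncomputable def extOfHomology :
    (P.complex.linearYonedaObj S Y).homology n →+ Abelian.Ext X Y n :=
  AddMonoidHom.liftOfSurjective ((P.complex.linearYonedaObj S Y).homologyπ n).hom.toAddMonoidHom
    (homologyπ_surjective _ n)
    ⟨extOfCycles S P Y n, fun c hc ↦ (extOfCycles_eq_zero_iff P Y n c).mpr hc⟩

lemma extOfHomology_homologyπ (c : (P.complex.linearYonedaObj S Y).cycles n) :
    extOfHomology P Y n ((P.complex.linearYonedaObj S Y).homologyπ n c) = extOfCycles S P Y n c :=
  AddMonoidHom.liftOfRightInverse_comp_apply ..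

variable (S) in
lemma extOfHomology_bijective : Function.Bijective (extOfHomology (S := S) P Y n) := by
  refine ⟨(injective_iff_map_eq_zero _).mpr ?_, fun e ↦ ?_⟩
  · rw [(homologyπ_surjective _ n).forall]
    intro c hc
    rwa [extOfHomology_homologyπ, extOfCycles_eq_zero_iff] at hc
  · obtain ⟨c, rfl⟩ := extOfCycles_surjective (S := S) P Y n e
    exact ⟨_, extOfHomology_homologyπ P Y n c⟩

variable [EnoughProjectives C]

variable (S) in
/-- The comparison between `Ext`, defined by deriving `Hom(-, Y)`, and `Abelian.Ext`, defined by
morphisms in the derived category. -/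
noncomputable def extAddEquivAbelianExt :
    ((Ext S C n).obj (.op X)).obj Y ≃+ Abelian.Ext X Y n :=
  (P.isoExt n Y).toLinearEquiv.toAddEquiv.trans
    (.ofBijective (extOfHomology P Y n) (extOfHomology_bijective S P Y n))

variable {P Y n}

lemma extAddEquivAbelianExt_naturality {P' : ProjectiveResolution X'} {g : X' ⟶ X} (φ : P'.Hom P g)
    (e : ((Ext S C n).obj (.op X)).obj Y) :
    extAddEquivAbelianExt S P' Y n (((Ext S C n).map g.op).app Y e) =
      (Abelian.Ext.mk₀ g).comp (extAddEquivAbelianExt S P Y n e) (zero_add n) := by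
  change extOfHomology P' Y n ((((Ext S C n).map g.op).app Y ≫ (P'.isoExt n Y).hom) e) =
    (Abelian.Ext.mk₀ g).comp (extOfHomology P Y n ((P.isoExt n Y).hom e)) (zero_add n)
  rw [isoExt_hom_naturality S φ n Y]
  obtain ⟨c, hc⟩ := homologyπ_surjective _ n ((P.isoExt n Y).hom e)
  have homologyπ_c := congr($(HomologicalComplex.homologyπ_naturality
    (linearYonedaObjMap S φ.hom Y) n) c)
  rw [ModuleCat.comp_apply] at homologyπ_c
  rw [ModuleCat.comp_apply, ← hc, homologyπ_c, ModuleCat.comp_apply, extOfHomology_homologyπ,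
    extOfHomology_homologyπ, extOfCycles_naturality]

end AbelianExt

section Support

variable {R : Type*} [CommRing R] {N : Type*} [AddCommGroup N] [Module R N]

lemma exists_mem_smul_eq_zero_of_forall_mem_support
    {S : Submonoid R}
    (h : ∀ q ∈ Module.support R N, ¬ Disjoint (q.asIdeal : Set R) S) (m : N) :
    ∃ s ∈ S, s • m = 0 := by
  by_contra! hm
  have hdisj : Disjoint ((R ∙ m).annihilator : Set R) S :=
    Set.disjoint_left.mpr fun s hs hsS ↦
      hm s hsS ((Submodule.mem_annihilator_span_singleton m s).mp hs)
  obtain ⟨q, hq, hmq, hqS⟩ := Ideal.exists_le_prime_disjoint _ _ hdisj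
  exact h ⟨q, hq⟩ (Module.mem_support_iff_exists_annihilator.mpr ⟨m, hmq⟩) hqS

lemma exists_mem_powers_sup_primeCompl_smul_eq_zero {x : R} {p : PrimeSpectrum R}
    (h : ∀ q ≤ p, x ∉ q.asIdeal → q ∉ Module.support R N) (m : N) :
    ∃ r ∈ Submonoid.powers x ⊔ p.asIdeal.primeCompl, r • m = 0 := by
  refine exists_mem_smul_eq_zero_of_forall_mem_support (fun q hq hqS ↦ ?_) m
  have disjoint_powers := hqS.mono_right (SetLike.coe_subset_coe.mpr le_sup_left)
  have disjoint_primeCompl := hqS.mono_right (SetLike.coe_subset_coe.mpr le_sup_right)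
  refine h q (fun r hr ↦ ?_) (fun hx ↦ ?_) hq
  · by_contra hrp
    exact Set.disjoint_left.mp disjoint_primeCompl hr hrp
  · exact Set.disjoint_left.mp disjoint_powers hx (Submonoid.mem_powers x)

end Support

section PowerTorsion

/-- The `K`-power torsion submodule `Γ_K(N)` of `N`: the union of the increasing chain of the
submodules annihilated by `K ^ n`. -/
def powerTorsion {R : Type*} [CommRing R] (K : Ideal R) (N : Type*) [AddCommGroup N]
    [Module R N] : Submodule R N :=
  ⨆ n : ℕ, Submodule.torsionBySet R N ↑(K ^ n)

variable {R : Type*} [CommRing R] {K L : Ideal R} {N N' : Type*} [AddCommGroup N] [Module R N]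
  [AddCommGroup N'] [Module R N']

lemma mem_powerTorsion {z : N} :
    z ∈ powerTorsion K N ↔ ∃ n : ℕ, ∀ k ∈ K ^ n, k • z = 0 := by
  rw [powerTorsion, Submodule.mem_iSup_of_directed _ (Monotone.directed_le fun m n h ↦
    Submodule.torsionBySet_le_torsionBySet_pow m n h K)]
  simp only [Submodule.mem_torsionBySet_iff, SetLike.coe_sort_coe, Subtype.forall]

lemma map_mem_powerTorsion (f : N →ₗ[R] N') {z : N} (hz : z ∈ powerTorsion K N) :
    f z ∈ powerTorsion K N' := by
  obtain ⟨n, hn⟩ := mem_powerTorsion.mp hz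
  exact mem_powerTorsion.mpr ⟨n, fun k hk ↦ by rw [← map_smul, hn k hk, map_zero]⟩

lemma mk_mem_powerTorsion (n : ℕ) (r : R) :
    (Ideal.Quotient.mk (K ^ n) r) ∈ powerTorsion K (R ⧸ K ^ n) :=
  mem_powerTorsion.mpr ⟨n, fun k hk ↦ by
    rw [Algebra.smul_def, Ideal.Quotient.algebraMap_eq, Ideal.Quotient.eq_zero_iff_mem.mpr hk,
      zero_mul]⟩

lemma powerTorsion_anti (h : K ≤ L) : powerTorsion L N ≤ powerTorsion K N :=
  iSup_mono fun n ↦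
    Submodule.torsionBySet_le_torsionBySet_of_subset (Ideal.pow_right_mono h n)

lemma mem_powerTorsion_sup_span_singleton {x : R} {z : N} :
    z ∈ powerTorsion (K ⊔ Ideal.span {x}) N ↔ z ∈ powerTorsion K N ∧ ∃ n : ℕ, x ^ n • z = 0 := by
  constructor
  · intro hz
    refine ⟨powerTorsion_anti le_sup_left hz, ?_⟩
    obtain ⟨n, hn⟩ := mem_powerTorsion.mp hz
    exact ⟨n, hn _ (Ideal.pow_mem_pow (Ideal.mem_sup_right (Ideal.mem_span_singleton_self x)) n)⟩
  · rintro ⟨hz, n, hn⟩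
    obtain ⟨m, hm⟩ := mem_powerTorsion.mp hz
    refine mem_powerTorsion.mpr ⟨m + n, fun k hk ↦ ?_⟩
    obtain ⟨a, ha, b, hb, rfl⟩ := Submodule.mem_sup.mp (Ideal.sup_pow_add_le_pow_sup_pow hk)
    rw [Ideal.span_singleton_pow, Ideal.mem_span_singleton'] at hb
    obtain ⟨c, rfl⟩ := hb
    rw [add_smul, hm a ha, mul_smul, hn, smul_zero, add_zero]

end PowerTorsion

section Baer

variable {R : Type*} [CommRing R] {N : Type*} [AddCommGroup N] [Module R N]

-- The obvious map `R ⧸ (J : a) → N` extends along `a : R ⧸ (J : a) → R ⧸ J`.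
lemma exists_smul_eq_of_baer (hN : Module.Baer R N) {J : Ideal R} {a : R} {e : N}
    (he : ∀ r, a * r ∈ J → r • e = 0) : ∃ f : N, (∀ k ∈ J, k • f = 0) ∧ a • f = e := by
  let mulA : R →ₗ[R] R := LinearMap.lsmul R R a
  have injective_mulA :
      Function.Injective (Submodule.mapQ (Submodule.comap mulA J) J mulA le_rfl) := by
    rw [← LinearMap.ker_eq_bot, Submodule.ker_mapQ, Submodule.mkQ_map_self]
  obtain ⟨F, hF⟩ := hN.extension_property _ injective_mulA
    (Submodule.liftQ (Submodule.comap mulA J) (LinearMap.toSpanSingleton R N e) he)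
  have smul_eq (k : R) : k • F (Submodule.Quotient.mk 1) = F (Submodule.Quotient.mk k) := by
    rw [← map_smul, ← Submodule.Quotient.mk_smul, smul_eq_mul, mul_one]
  refine ⟨F (Submodule.Quotient.mk 1), fun k hk ↦ ?_, ?_⟩
  · rw [smul_eq, (Submodule.Quotient.mk_eq_zero J).mpr hk, map_zero]
  · have hF1 : F (Submodule.Quotient.mk (a * 1)) = (1 : R) • e :=
      congr($hF (Submodule.Quotient.mk 1))
    rw [smul_eq, ← mul_one a, hF1, one_smul]

lemma exists_pow_mul_mem_imp [IsNoetherianRing R] (J : Ideal R) (x : R) :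
    ∃ l : ℕ, ∀ n r, x ^ (l + n) * r ∈ J → x ^ l * r ∈ J := by
  let f : Module.End R (R ⧸ J) := algebraMap R _ x
  obtain ⟨l, hl⟩ := monotone_stabilizes_iff_noetherian.mpr inferInstance f.iterateKer
  have mem_iff (k : ℕ) (r : R) : Submodule.Quotient.mk r ∈ f.iterateKer k ↔ x ^ k * r ∈ J := by
    rw [LinearMap.iterateKer_coe, LinearMap.mem_ker, ← map_pow, Module.algebraMap_end_apply,
      ← Submodule.Quotient.mk_smul, Submodule.Quotient.mk_eq_zero, smul_eq_mul]
  refine ⟨l, fun n r hr ↦ ?_⟩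
  rwa [← mem_iff, hl (l + n) (Nat.le_add_right l n), mem_iff]

lemma exists_mem_powerTorsion_pow_smul_eq_of_baer [IsNoetherianRing R] (hN : Module.Baer R N)
    {K : Ideal R} (x : R) (n : ℕ) {e : N} (he : e ∈ powerTorsion K N) :
    ∃ f ∈ powerTorsion K N, ∃ l : ℕ, x ^ (l + n) • f = x ^ l • e := by
  obtain ⟨m, hm⟩ := mem_powerTorsion.mp he
  obtain ⟨l, hl⟩ := exists_pow_mul_mem_imp (K ^ m) x
  obtain ⟨f, hf, hfe⟩ := exists_smul_eq_of_baer hN (J := K ^ m) (a := x ^ (l + n))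
    (e := x ^ l • e) fun r hr ↦ by rw [smul_smul, mul_comm, hm _ (hl n r hr)]
  exact ⟨f, mem_powerTorsion.mpr ⟨m, hf⟩, l, hfe⟩

end Baer

section TorsionFunctor

/-- The `K`-power torsion functor `N ↦ Γ_K(N)`. -/
def powerTorsionFunctor {R : Type u} [CommRing R] (K : Ideal R) :
    ModuleCat.{u} R ⥤ ModuleCat.{u} R where
  obj N := .of R (powerTorsion K N)
  map f := ModuleCat.ofHom (f.hom.restrict fun _ ↦ map_mem_powerTorsion f.hom)

variable {R : Type u} [CommRing R]

instance (K : Ideal R) : (powerTorsionFunctor K).Additive where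

instance (K : Ideal R) : (powerTorsionFunctor K).Linear R where

/-- The right derived functors `R^i Γ_K` of the `K`-power torsion functor. -/
noncomputable def torsionCohomology (K : Ideal R) (i : ℕ) :
    ModuleCat.{u} R ⥤ ModuleCat.{u} R :=
  (powerTorsionFunctor K).rightDerived i

end TorsionFunctor

namespace torsionCohomology

variable {R : Type u} [CommRing R] {K : Ideal R} {M : ModuleCat.{u} R}

section Resolution

variable (E : InjectiveResolution M)

lemma baer_cocomplex_X (j : ℕ) : Module.Baer R (E.cocomplex.X j) :=
  have : Injective (ModuleCat.of R (E.cocomplex.X j)) := E.injective j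
  Module.Baer.of_injective (Module.injective_module_of_injective_object R _)

/-- `R^i Γ_K(M)` is the cohomology of the complex of `K`-power torsion submodules of any injective
resolution of `M`. -/
noncomputable def equivHomology (K : Ideal R) (i : ℕ) :
    (torsionCohomology K i).obj M ≃ₗ[R]
      (((powerTorsionFunctor K).mapHomologicalComplex _).obj E.cocomplex).homology i :=
  (E.isoRightDerivedObj (powerTorsionFunctor K) i).toLinearEquiv

variable {i j : ℕ} (hi : (ComplexShape.up ℕ).prev j = i)
include hi

lemma forall_exists_smul_eq_zero_iff (S : Set R) :
    (∀ m : (torsionCohomology K j).obj M, ∃ s ∈ S, s • m = 0) ↔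
      ∀ z ∈ powerTorsion K (E.cocomplex.X j), E.cocomplex.d j (j + 1) z = 0 →
        ∃ s ∈ S, ∃ y ∈ powerTorsion K (E.cocomplex.X i), E.cocomplex.d i j y = s • z := by
  rw [(equivHomology E K j).symm.surjective.forall]
  simp only [← map_smul, LinearEquiv.map_eq_zero_iff]
  refine (forall_homology_exists_smul_eq_zero_iff _ hi (CochainComplex.next ℕ j) S).trans ?_
  constructor
  · intro h z hz hdz
    obtain ⟨r, hr, y, hy⟩ := h ⟨z, hz⟩ (Subtype.ext hdz)
    exact ⟨r, hr, y.1, y.2, congr($hy.1)⟩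
  · intro h z hdz
    obtain ⟨r, hr, y, hy, hyz⟩ := h z.1 z.2 congr($hdz.1)
    exact ⟨r, hr, ⟨y, hy⟩, Subtype.ext hyz⟩

lemma notMem_support_iff {p : PrimeSpectrum R} :
    p ∉ Module.support R ((torsionCohomology K j).obj M) ↔
      ∀ z ∈ powerTorsion K (E.cocomplex.X j), E.cocomplex.d j (j + 1) z = 0 →
        ∃ r ∉ p.asIdeal, ∃ y ∈ powerTorsion K (E.cocomplex.X i), E.cocomplex.d i j y = r • z :=
  Module.notMem_support_iff'.trans (forall_exists_smul_eq_zero_iff E hi p.asIdeal.primeCompl)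

lemma subsingleton_iff :
    Subsingleton ((torsionCohomology K j).obj M) ↔
      ∀ z ∈ powerTorsion K (E.cocomplex.X j), E.cocomplex.d j (j + 1) z = 0 →
        ∃ y ∈ powerTorsion K (E.cocomplex.X i), E.cocomplex.d i j y = z := by
  rw [subsingleton_iff_forall_eq 0]
  simpa only [Set.mem_singleton_iff, exists_eq_left, one_smul] using
    forall_exists_smul_eq_zero_iff (K := K) E hi {1}

end Resolution

lemma le_of_mem_support {i : ℕ} {p : PrimeSpectrum R}
    (hp : p ∈ Module.support R ((torsionCohomology K i).obj M)) : K ≤ p.asIdeal := by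
  contrapose! hp
  obtain ⟨r, hrK, hrp⟩ := SetLike.not_le_iff_exists.mp hp
  refine (notMem_support_iff (injectiveResolution M) rfl).mpr fun z hz _ ↦ ?_
  obtain ⟨n, hn⟩ := mem_powerTorsion.mp hz
  refine ⟨r ^ n, fun h ↦ hrp (p.isPrime.mem_of_pow_mem n h), 0, zero_mem _, ?_⟩
  rw [map_zero, hn _ (Ideal.pow_mem_pow hrK n)]

instance (i : ℕ) : (torsionCohomology K i).Linear R :=
  inferInstanceAs (((powerTorsionFunctor K).rightDerived i).Linear R)

lemma annihilator_le_of_mem_support {i : ℕ} {p : PrimeSpectrum R}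
    (hp : p ∈ Module.support R ((torsionCohomology K i).obj M)) :
    Module.annihilator R M ≤ p.asIdeal :=
  (annihilator_le_annihilator_obj _ M).trans (Module.annihilator_le_of_mem_support hp)

lemma mem_support_zero_anti {K L : Ideal R} (h : K ≤ L) {p : PrimeSpectrum R}
    (hp : p ∈ Module.support R ((torsionCohomology L 0).obj M)) :
    p ∈ Module.support R ((torsionCohomology K 0).obj M) := by
  contrapose! hp
  rw [notMem_support_iff (injectiveResolution M) (CochainComplex.prev_nat_zero)] at hp ⊢
  intro z hz hdz
  obtain ⟨r, hr, y, _, hyz⟩ := hp z (powerTorsion_anti h hz) hdz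
  refine ⟨r, hr, 0, zero_mem _, ?_⟩
  rw [map_zero, ← hyz, HomologicalComplex.shape _ _ _ (by simp)]
  rfl

-- Dividing `u` by `x ^ k` up to further powers of `x` gives some `f` for which `s • y - d f` is
-- `x`-power torsion.
lemma exists_mem_powerTorsion_sup_span_singleton_d_eq [IsNoetherianRing R]
    (E : InjectiveResolution M) {i j k : ℕ} {x s : R} {y : E.cocomplex.X j}
    (hy : y ∈ powerTorsion K (E.cocomplex.X j)) {u : E.cocomplex.X i}
    (hu : u ∈ powerTorsion K (E.cocomplex.X i)) (huy : E.cocomplex.d i j u = (x ^ k * s) • y) :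
    ∃ y' ∈ powerTorsion (K ⊔ Ideal.span {x}) (E.cocomplex.X j),
      E.cocomplex.d j (j + 1) y' = s • E.cocomplex.d j (j + 1) y := by
  obtain ⟨f, hf, l, hfu⟩ :=
    exists_mem_powerTorsion_pow_smul_eq_of_baer (baer_cocomplex_X E _) x k hu
  refine ⟨s • y - E.cocomplex.d i j f, mem_powerTorsion_sup_span_singleton.mpr
    ⟨sub_mem (Submodule.smul_mem _ _ hy) (map_mem_powerTorsion (E.cocomplex.d i j).hom hf),
      l + k, ?_⟩, ?_⟩
  · rw [smul_sub, ← map_smul, hfu, map_smul, huy, smul_smul, smul_smul, pow_add, mul_assoc,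
      sub_self]
  · have d_d_f : E.cocomplex.d j (j + 1) (E.cocomplex.d i j f) = 0 :=
      congr($(E.cocomplex.d_comp_d i j (j + 1)) f)
    rw [map_sub, d_d_f, sub_zero, map_smul]

lemma mem_support_succ_sup_span_singleton [IsNoetherianRing R] {j : ℕ} {x : R}
    {p : PrimeSpectrum R}
    (hp : p ∈ Module.support R ((torsionCohomology (K ⊔ Ideal.span {x}) (j + 1)).obj M)) :
    p ∈ Module.support R ((torsionCohomology K (j + 1)).obj M) ∨
      ∃ q ≤ p, x ∉ q.asIdeal ∧ q ∈ Module.support R ((torsionCohomology K j).obj M) := by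
  by_contra! h
  obtain ⟨hpK, hqK⟩ := h
  let E := injectiveResolution M
  have smul_eq_zero := (forall_exists_smul_eq_zero_iff E rfl _).mp
    (exists_mem_powers_sup_primeCompl_smul_eq_zero hqK)
  rw [notMem_support_iff E (CochainComplex.prev_nat_succ j)] at hpK
  refine absurd hp ((notMem_support_iff E (CochainComplex.prev_nat_succ j)).mpr fun z hz hdz ↦ ?_)
  obtain ⟨hzK, n, hn⟩ := mem_powerTorsion_sup_span_singleton.mp hz
  obtain ⟨s, hs, y, hy, hyz⟩ := hpK z hzK hdz
  have d_smul_y : E.cocomplex.d j (j + 1) (x ^ n • y) = 0 := by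
    rw [map_smul, hyz, smul_comm, hn, smul_zero]
  obtain ⟨r, hr, u, hu, hdu⟩ := smul_eq_zero (x ^ n • y) (Submodule.smul_mem _ _ hy) d_smul_y
  obtain ⟨_, ⟨k, rfl⟩, s', hs', rfl⟩ := Submonoid.mem_sup.mp hr
  obtain ⟨y', hy', hdy'⟩ := exists_mem_powerTorsion_sup_span_singleton_d_eq E hy hu
    (k := k + n) (s := s') (x := x) (by rw [hdu, smul_smul]; ring_nf)
  exact ⟨s' * s, p.asIdeal.primeCompl.mul_mem hs' hs, y', hy', by rw [hdy', hyz, smul_smul]⟩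

lemma mem_support_succ_sup [IsNoetherianRing R] {I J : Ideal R} {i : ℕ} {p : PrimeSpectrum R}
    (hp : p ∈ Module.support R ((torsionCohomology (I ⊔ J) (i + 1)).obj M)) :
    p ∈ Module.support R ((torsionCohomology I (i + 1)).obj M) ∨
      ∃ J' : Ideal R, ∃ q < p, q ∈ Module.support R ((torsionCohomology (I ⊔ J') i).obj M) := by
  induction J, IsNoetherian.noetherian J using Submodule.fg_induction generalizing I with
  | singleton x =>
    obtain hpI | ⟨q, hqp, hxq, hq⟩ := mem_support_succ_sup_span_singleton hp
    · exact .inl hpI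
    · have hxp : x ∈ p.asIdeal :=
        le_of_mem_support hp (Ideal.mem_sup_right (Ideal.mem_span_singleton_self x))
      refine .inr ⟨⊥, q, hqp.lt_of_ne fun h ↦ hxq (h ▸ hxp), ?_⟩
      rwa [sup_bot_eq]
  | sup J₁ J₂ _ _ ih₁ ih₂ =>
    rw [← sup_assoc] at hp
    obtain hp | ⟨J', q, hqp, hq⟩ := ih₂ hp
    · exact ih₁ hp
    · exact .inr ⟨J₁ ⊔ J', q, hqp, by rwa [← sup_assoc]⟩

lemma mem_zeroLocus_of_mem_support {I J : Ideal R} {i : ℕ} {p : PrimeSpectrum R}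
    (hp : p ∈ Module.support R ((torsionCohomology (I ⊔ J) i).obj M)) :
    p ∈ PrimeSpectrum.zeroLocus ↑(I ⊔ Module.annihilator R M) :=
  sup_le (le_sup_left.trans (le_of_mem_support hp)) (annihilator_le_of_mem_support hp)

theorem exists_nontrivial_le_add_height [IsNoetherianRing R] {I J : Ideal R} {i : ℕ}
    {p : PrimeSpectrum.zeroLocus (R := R) ↑(I ⊔ Module.annihilator R M)}
    (hp : p.1 ∈ Module.support R ((torsionCohomology (I ⊔ J) i).obj M)) :
    ∃ j, Nontrivial ((torsionCohomology I j).obj M) ∧ (i : ℕ∞) ≤ j + Order.height p := by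
  induction i generalizing J p with
  | zero =>
    exact ⟨0, Module.nonempty_support_iff.mp ⟨p, mem_support_zero_anti le_sup_left hp⟩, by simp⟩
  | succ i ih =>
    obtain hp | ⟨J', q, hqp, hq⟩ := mem_support_succ_sup hp
    · exact ⟨i + 1, Module.nonempty_support_iff.mp ⟨p.1, hp⟩, le_self_add⟩
    · let q' : PrimeSpectrum.zeroLocus (R := R) ↑(I ⊔ Module.annihilator R M) :=
        ⟨q, mem_zeroLocus_of_mem_support hq⟩
      have hq'p : q' < p := hqp
      obtain ⟨j, hj, hij⟩ := ih (p := q') hq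
      refine ⟨j, hj, ?_⟩
      calc ((i + 1 : ℕ) : ℕ∞) ≤ j + Order.height q' + 1 := by push_cast; gcongr
        _ ≤ j + Order.height p := by
          rw [add_assoc]
          gcongr
          exact Order.height_add_one_le hq'p

theorem exists_nontrivial_le_add_ringKrullDim [IsNoetherianRing R] {I J : Ideal R} {i : ℕ}
    (h : Nontrivial ((torsionCohomology (I ⊔ J) i).obj M)) :
    ∃ j : ℕ, Nontrivial ((torsionCohomology I j).obj M) ∧
      (i : WithBot ℕ∞) ≤ j + ringKrullDim (R ⧸ (I ⊔ Module.annihilator R M)) := by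
  obtain ⟨p, hp⟩ := (Module.nonempty_support_iff (R := R)).mpr h
  let p' : PrimeSpectrum.zeroLocus (R := R) ↑(I ⊔ Module.annihilator R M) :=
    ⟨p, mem_zeroLocus_of_mem_support hp⟩
  obtain ⟨j, hj, hij⟩ := exists_nontrivial_le_add_height (p := p') hp
  refine ⟨j, hj, ?_⟩
  calc (i : WithBot ℕ∞) ≤ j + Order.height p' := mod_cast hij
    _ ≤ j + Order.krullDim _ := by gcongr; exact Order.height_le_krullDim p'
    _ = j + ringKrullDim (R ⧸ (I ⊔ Module.annihilator R M)) := by rw [ringKrullDim_quotient]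

end torsionCohomology

section LocalCohomology

open Limits

variable {R : Type u} [CommRing R] {K : Ideal R} {M : ModuleCat.{u} R}

lemma exists_hom_mk_one_eq {N : ModuleCat.{u} R} {J : Ideal R} {z : N}
    (hz : ∀ k ∈ J, k • z = 0) :
    ∃ f : ModuleCat.of R (R ⧸ J) ⟶ N, f (Ideal.Quotient.mk J 1) = z :=
  ⟨ModuleCat.ofHom (Submodule.liftQ J (LinearMap.toSpanSingleton R N z) hz), one_smul R z⟩

lemma quotient_hom_ext {N : ModuleCat.{u} R} {J : Ideal R}
    {f g : ModuleCat.of R (R ⧸ J) ⟶ N}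
    (h : f (Ideal.Quotient.mk J 1) = g (Ideal.Quotient.mk J 1)) : f = g := by
  ext
  exact h

/-- The projection `R ⧸ K ^ n ⟶ R ⧸ K ^ m` for `m ≤ n`, as the transition map of the system whose
`Ext` modules define `localCohomology K`. -/
noncomputable def quotientPowMap (K : Ideal R) {m n : ℕ} (h : m ≤ n) :
    ModuleCat.of R (R ⧸ K ^ n) ⟶ ModuleCat.of R (R ⧸ K ^ m) :=
  (localCohomology.ringModIdeals (localCohomology.idealPowersDiagram K)).map (homOfLE h).op

lemma subsingleton_colimit_iff {J : Type*} [Category* J] [IsFiltered J]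
    (F : J ⥤ ModuleCat.{u} R) [HasColimit F] [PreservesColimit F (forget (ModuleCat.{u} R))] :
    Subsingleton (colimit F : ModuleCat.{u} R) ↔
      ∀ (j : J) (e : F.obj j), ∃ (k : J) (f : j ⟶ k), F.map f e = 0 := by
  constructor
  · intro _ j e
    obtain ⟨k, f, g, hfg⟩ := (Concrete.colimit_rep_eq_iff_exists F e (0 : F.obj j)).mp
      (Subsingleton.elim _ _)
    exact ⟨k, f, hfg.trans (map_zero _)⟩
  · refine fun h ↦ subsingleton_of_forall_eq 0 fun a ↦ ?_
    obtain ⟨j, e, rfl⟩ := Concrete.colimit_exists_rep F a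
    obtain ⟨k, f, hf⟩ := h j e
    rw [← colimit.w F f, ModuleCat.comp_apply, hf, map_zero]

lemma subsingleton_localCohomology_iff {i : ℕ} :
    Subsingleton ((localCohomology K i).obj M) ↔
      ∀ (m : ℕ) (e : ((Ext R (ModuleCat.{u} R) i).obj (.op (.of R (R ⧸ K ^ m)))).obj M),
        ∃ (n : ℕ) (h : m ≤ n),
          ((Ext R (ModuleCat.{u} R) i).map (quotientPowMap K h).op).app M e = 0 := by
  let D := localCohomology.diagram (localCohomology.idealPowersDiagram K) i
  have : HasColimit D := localCohomology.hasColimitDiagram (localCohomology.idealPowersDiagram K) i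
  have := preservesSmallestFilteredColimits_of_preservesFilteredColimits (forget (ModuleCat.{u} R))
  have := PreservesFilteredColimitsOfSize.preserves_filtered_colimits
    (F := forget (ModuleCat.{u} R)) ((ℕᵒᵖ)ᵒᵖ)
  have iso : (localCohomology K i).obj M ≅ colimit (D ⋙ (evaluation _ _).obj M) :=
    colimitObjIsoColimitCompEvaluation D M
  rw [iso.toLinearEquiv.toEquiv.subsingleton_congr, subsingleton_colimit_iff]
  constructor
  · intro h m e
    obtain ⟨n, f, hf⟩ := h (.op (.op m)) e
    exact ⟨n.unop.unop, leOfHom f.unop.unop, hf⟩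
  · intro h m e
    obtain ⟨n, hmn, hn⟩ := h m.unop.unop e
    exact ⟨.op (.op n), (homOfLE hmn).op.op, hn⟩

variable (K M) in
lemma subsingleton_localCohomology_iff_abelianExt (i : ℕ) :
    Subsingleton ((localCohomology K i).obj M) ↔
      ∀ (m : ℕ) (e : Abelian.Ext (ModuleCat.of R (R ⧸ K ^ m)) M i), ∃ (n : ℕ) (h : m ≤ n),
        (Abelian.Ext.mk₀ (quotientPowMap K h)).comp e (zero_add i) = 0 := by
  let P (n : ℕ) := projectiveResolution (ModuleCat.of R (R ⧸ K ^ n))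
  let φ {m n : ℕ} (h : m ≤ n) : (P n).Hom (P m) (quotientPowMap K h) :=
    ⟨ProjectiveResolution.lift (quotientPowMap K h) (P n) (P m),
      ProjectiveResolution.lift_commutes_zero (quotientPowMap K h) (P n) (P m)⟩
  rw [subsingleton_localCohomology_iff]
  refine forall_congr' fun m ↦
    (extAddEquivAbelianExt R (P m) M i).toEquiv.forall_congr fun e ↦ ?_
  refine exists_congr fun n ↦ exists_congr fun h ↦ ?_
  exact (EmbeddingLike.map_eq_zero_iff (f := extAddEquivAbelianExt R (P n) M i)).symm.trans
    (by rw [extAddEquivAbelianExt_naturality (φ h)]; rfl)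

lemma subsingleton_localCohomology_iff_torsionCohomology (i : ℕ) :
    Subsingleton ((localCohomology K i).obj M) ↔
      Subsingleton ((torsionCohomology K i).obj M) := by
  let E := injectiveResolution M
  rw [subsingleton_localCohomology_iff_abelianExt, torsionCohomology.subsingleton_iff E rfl]
  constructor
  · intro h z hz hdz
    obtain ⟨m, hm⟩ := mem_powerTorsion.mp hz
    obtain ⟨f, rfl⟩ := exists_hom_mk_one_eq hm
    have hf : f ≫ E.cocomplex.d i (i + 1) = 0 := quotient_hom_ext hdz
    obtain ⟨n, hmn, hn⟩ := h m (E.extMk f (i + 1) rfl hf)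
    rw [E.mk₀_comp_extMk, injective_extMk_eq_zero_iff rfl] at hn
    obtain ⟨g, hg⟩ := hn
    exact ⟨g (Ideal.Quotient.mk _ 1), map_mem_powerTorsion g.hom (mk_mem_powerTorsion n 1),
      congr($hg (Ideal.Quotient.mk _ 1))⟩
  · intro h m e
    obtain ⟨f, hf, rfl⟩ := E.extMk_surjective e (i + 1) rfl
    obtain ⟨y, hy, hyf⟩ := h (f (Ideal.Quotient.mk _ 1))
      (map_mem_powerTorsion f.hom (mk_mem_powerTorsion m 1)) congr($hf (Ideal.Quotient.mk _ 1))
    obtain ⟨n, hn⟩ := mem_powerTorsion.mp hy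
    obtain ⟨g, rfl⟩ := exists_hom_mk_one_eq
      fun k hk ↦ hn k (Ideal.pow_le_pow_right (le_max_right m n) hk)
    refine ⟨max m n, le_max_left m n, ?_⟩
    rw [E.mk₀_comp_extMk, injective_extMk_eq_zero_iff rfl]
    exact ⟨g, quotient_hom_ext hyf⟩

lemma nontrivial_localCohomology_iff (i : ℕ) :
    Nontrivial ((localCohomology K i).obj M) ↔ Nontrivial ((torsionCohomology K i).obj M) := by
  rw [← not_subsingleton_iff_nontrivial, subsingleton_localCohomology_iff_torsionCohomology,
    not_subsingleton_iff_nontrivial]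

end LocalCohomology

/-- if `dim (R/(I + Ann M)) = d` and `H^{d+t}_{I+J}(M) ≠ 0` for some ideal `J`,
then `t ≤ cd(I,M)`. -/
theorem le_cohomologicalDimension_of_nontrivial_localCohomology_sum
    (R : Type u) [CommRing R] [IsNoetherianRing R] (I : Ideal R) (M : ModuleCat.{u} R)
    (d t : ℕ) (hd : ringKrullDim (R ⧸ (I + Module.annihilator R M)) = (d : WithBot ℕ∞))
    (J : Ideal R) (hJ : Nontrivial ((localCohomology (I + J) (d + t)).obj M)) :
    (t : ℕ∞) ≤ cohomologicalDimension I M := by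
  obtain ⟨j, hj, hle⟩ := torsionCohomology.exists_nontrivial_le_add_ringKrullDim
    ((nontrivial_localCohomology_iff (d + t)).mp hJ)
  have hle' : d + t ≤ j + d := by
    rw [← Submodule.add_eq_sup, hd] at hle
    exact_mod_cast hle
  have htj : t ≤ j := by lia
  calc (t : ℕ∞) ≤ j := by exact_mod_cast htj
    _ ≤ cohomologicalDimension I M :=
      le_sSup ⟨j, rfl, (nontrivial_localCohomology_iff j).mpr hj⟩
end
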